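/- arXiv:1402.6881 — 8 statements merged into one kernel-verified Lean document; each statement's English description precedes it below -/
import Mathlib

section
/- Let k be a field of characteristic 0 containing a primitive p^{n+1}-th root of unity (p a prime, n ≥ 1), let K be an algebraic closure of k and Γ = Gal(K/k) its group of k-algebra automorphisms. Let H be a finite group of cardinality p^n and Z a subgroup of H which is cyclic of order p and is contained both in the center of H and in the commutator subgroup of H. Then for every Γ-equivariant central extension (E, φ, j, π) of H by Kˣ, there exists a group homomorphism s : Z → E such that π(s(z)) = z for all z ∈ Z and such that s takes values in the Γ-fixed points: φ(γ)(s(z)) = s(z) for all γ ∈ Γ and z ∈ Z. (This says the pullback of the extension to Z splits equivariantly; it is the key lemma 'lem morph brauer nul' stating that the natural map Ext^c_k(H, G_m) → Ext^c_k(Z, G_m) is zero.) -/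
open scoped IsMulCommutative in
theorem hom_center_eq_one_aux {E : Type*} [Group E] (d : E →* Subgroup.center E)
    (e : E) (he : e ∈ commutator E) : d e = 1 :=
  MonoidHom.mem_ker.1 (Abelianization.commutator_subset_ker (A := Subgroup.center E) d he)

theorem fixed_of_mem_commutator_aux {E : Type*} [Group E] (f : E →* E)
    (hf : ∀ e, f e * e⁻¹ ∈ Subgroup.center E) (e : E) (he : e ∈ commutator E) : f e = e := by
  let d : E →* Subgroup.center E :=
    { toFun := fun e => ⟨f e * e⁻¹, hf e⟩
      map_one' := by simp
      map_mul' := by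
        intro a b
        apply Subtype.ext
        have h := Subgroup.mem_center_iff.1 (hf b) a⁻¹
        simp only [map_mul, mul_inv_rev, Subgroup.coe_mul]
        calc f a * f b * (b⁻¹ * a⁻¹) = f a * ((f b * b⁻¹) * a⁻¹) := by group
          _ = f a * a⁻¹ * (f b * b⁻¹) := by rw [← h]; group }
  have h := hom_center_eq_one_aux d e he
  have h2 : f e * e⁻¹ = 1 := congrArg Subtype.val h
  exact mul_inv_eq_one.1 h2

/-- Key lemma: for `H` a finite group of order `p^n` and `Z ≤ Z(H) ∩ [H,H]` cyclic of
order `p`, over a field `k` of characteristic zero containing the `p^(n+1)`-th roots of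
unity, every `Gal(K/k)`-equivariant central extension of `H` by `Kˣ` splits equivariantly
over `Z`; i.e. the map `Ext^c_k(H, G_m) → Ext^c_k(Z, G_m)` is zero. -/
theorem extension_splits_equivariantly_over_central_cyclic
    (p : ℕ) (hp : p.Prime) (n : ℕ) (hn : 1 ≤ n)
    (k : Type*) [Field k] [CharZero k]
    (ζ : k) (hζ : IsPrimitiveRoot ζ (p ^ (n + 1)))
    (K : Type*) [Field K] [Algebra k K] [IsAlgClosure k K]
    (H : Type*) [Group H] (hH : Nat.card H = p ^ n)
    (Z : Subgroup H) (hZcyc : IsCyclic Z) (hZcard : Nat.card Z = p)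
    (hZcenter : Z ≤ Subgroup.center H) (hZcomm : (Z : Subgroup H) ≤ commutator H)
    (E : Type*) [Group E]
    (φ : (K ≃ₐ[k] K) →* MulAut E)
    (j : Kˣ →* E) (hj : Function.Injective j)
    (hjcenter : ∀ x : Kˣ, j x ∈ Subgroup.center E)
    (hjequiv : ∀ (γ : K ≃ₐ[k] K) (x : Kˣ), φ γ (j x) = j (Units.map (γ : K →* K) x))
    (π : E →* H) (hπ : Function.Surjective π)
    (hker : π.ker = j.range)
    (hπequiv : ∀ (γ : K ≃ₐ[k] K) (e : E), π (φ γ e) = π e) :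
    ∃ s : Z →* E, (∀ z : Z, π (s z) = (z : H)) ∧
      ∀ (γ : K ≃ₐ[k] K) (z : Z), φ γ (s z) = s z := by
  classical
  have hp0 : 0 < p := hp.pos
  obtain ⟨g, hg⟩ := hZcyc.exists_generator
  have hgord : orderOf g = p := by rw [orderOf_eq_card_of_forall_mem_zpowers hg, hZcard]
  -- lift to the commutator subgroup
  have hmap : (commutator E).map π = commutator H := by
    rw [commutator_def, commutator_def, Subgroup.map_commutator,
      ← MonoidHom.range_eq_map, MonoidHom.range_eq_top.2 hπ]
  obtain ⟨e, he, heg⟩ : (g : H) ∈ (commutator E).map π := by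
    rw [hmap]; exact hZcomm g.2
  have hkc : π.ker ≤ Subgroup.center E := by
    rw [hker]; rintro _ ⟨x, rfl⟩; exact hjcenter x
  have hfix : ∀ γ, φ γ e = e := by
    intro γ
    refine fixed_of_mem_commutator_aux (φ γ).toMonoidHom (fun x => hkc ?_) e he
    rw [MonoidHom.mem_ker]
    simp [hπequiv]
  have hep : e ^ p ∈ π.ker := by
    have h1 : g ^ p = 1 := by rw [← hgord]; exact pow_orderOf_eq_one g
    have h2 : (g : H) ^ p = 1 := by exact_mod_cast congrArg Subtype.val h1
    rw [MonoidHom.mem_ker, map_pow]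
    rw [heg]; exact h2
  rw [hker] at hep
  obtain ⟨a, ha⟩ := hep
  have hidx : π.ker.index = p ^ n := by
    rw [Subgroup.index_ker, MonoidHom.range_eq_top.2 hπ, Subgroup.card_top, hH]
  have hdvd : (Subgroup.center E).index ∣ p ^ n := by
    rw [← hidx]; exact Subgroup.index_dvd_of_le hkc
  have : (Subgroup.center E).FiniteIndex :=
    ⟨fun h => by rw [h, zero_dvd_iff] at hdvd; exact (pow_pos hp0 n).ne' hdvd⟩
  have hepn : e ^ (p ^ n) = 1 := by
    have h := hom_center_eq_one_aux (MonoidHom.transferCenterPow E) e he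
    have h2 : e ^ (Subgroup.center E).index = 1 := congrArg Subtype.val h
    obtain ⟨c, hc⟩ := hdvd
    rw [hc, pow_mul, h2, one_pow]
  have han : a ^ (p ^ n) = 1 := by
    apply hj
    rw [map_pow, ha, ← pow_mul, mul_comm, pow_mul, hepn, one_pow, map_one]
  have hζK : IsPrimitiveRoot (algebraMap k K ζ) (p ^ (n + 1)) :=
    hζ.map_of_injective (algebraMap k K).injective
  have hζp : IsPrimitiveRoot ((algebraMap k K ζ) ^ p) (p ^ n) :=
    hζK.pow (pow_pos hp0 _) (pow_succ' p n)
  have : NeZero (p ^ n) := ⟨(pow_pos hp0 n).ne'⟩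
  obtain ⟨i, -, hi⟩ := hζp.eq_pow_of_pow_eq_one (ξ := (a : K)) (by rw [← Units.val_pow_eq_pow_val, han, Units.val_one])
  have hζ0 : ζ ≠ 0 := hζ.ne_zero (pow_pos hp0 _).ne'
  let b : Kˣ := Units.map (algebraMap k K : k →* K) (Units.mk0 ζ hζ0 ^ i)
  have hb : b ^ p = a := by
    apply Units.ext
    rw [← hi]
    simp [b, ← pow_mul, mul_comm]
  have hbfix : ∀ γ, φ γ (j b) = j b := by
    intro γ
    rw [hjequiv]
    congr 1
    apply Units.ext
    simp [b]
  have hcomm : Commute e (j b)⁻¹ :=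
    (Commute.inv_right (Subgroup.mem_center_iff.1 (hjcenter b) e))
  have hpow : (e * (j b)⁻¹) ^ p = 1 := by
    rw [hcomm.mul_pow, ← ha, inv_pow, ← map_pow, hb, mul_inv_cancel]
  have hdv : orderOf (e * (j b)⁻¹) ∣ orderOf g := by
    rw [hgord]; exact orderOf_dvd_of_pow_eq_one hpow
  have hjb : π (j b) = 1 := by
    rw [← MonoidHom.mem_ker, hker]; exact ⟨b, rfl⟩
  have hs := monoidHomOfForallMemZpowers_apply_gen hg hdv
  refine ⟨monoidHomOfForallMemZpowers hg hdv, fun z => ?_, fun γ z => ?_⟩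
  · obtain ⟨m, rfl⟩ := Subgroup.mem_zpowers_iff.1 (hg z)
    rw [map_zpow, map_zpow, hs, map_mul, map_inv, hjb, heg]
    simp
  · obtain ⟨m, rfl⟩ := Subgroup.mem_zpowers_iff.1 (hg z)
    rw [map_zpow, map_zpow, hs, map_mul, map_inv, hfix, hbfix]
end

section
/- Let k be a number field, K an algebraic closure of k and Γ = Gal(K/k) its group of k-algebra automorphisms. Let H = Q₈ be the quaternion group of order 8 and Z its center (which is cyclic of order 2). Then for every Γ-equivariant central extension (E, φ, j, π) of H by Kˣ, there exists a group homomorphism s : Z → E such that π(s(z)) = z for all z ∈ Z and such that φ(γ)(s(z)) = s(z) for all γ ∈ Γ and z ∈ Z. (This is the statement that the natural map Ext^c_k(Q₈, G_m) → Ext^c_k(Z, G_m) is the zero morphism.) -/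
/-- For `H = Q₈` the quaternion group of order 8 with center `Z`, over a number field `k`
with algebraic closure `K` and `Γ = Gal(K/k)`, every `Γ`-equivariant central extension of
`H` by `Kˣ` splits equivariantly over `Z`; i.e. the natural map
`Ext^c_k(Q₈, G_m) → Ext^c_k(Z, G_m)` is the zero morphism. -/
theorem quaternion_extension_splits_equivariantly_over_center
    (k : Type*) [Field k] [NumberField k]
    (K : Type*) [Field K] [Algebra k K] [IsAlgClosure k K]
    (E : Type*) [Group E]
    (φ : (K ≃ₐ[k] K) →* MulAut E)
    (j : Kˣ →* E) (hj : Function.Injective j)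
    (hjcenter : ∀ x : Kˣ, j x ∈ Subgroup.center E)
    (hjequiv : ∀ (γ : K ≃ₐ[k] K) (x : Kˣ), φ γ (j x) = j (Units.map (γ : K →* K) x))
    (π : E →* QuaternionGroup 2) (hπ : Function.Surjective π)
    (hker : π.ker = j.range)
    (hπequiv : ∀ (γ : K ≃ₐ[k] K) (e : E), π (φ γ e) = π e) :
    ∃ s : (Subgroup.center (QuaternionGroup 2)) →* E,
      (∀ z : Subgroup.center (QuaternionGroup 2), π (s z) = (z : QuaternionGroup 2)) ∧
      ∀ (γ : K ≃ₐ[k] K) (z : Subgroup.center (QuaternionGroup 2)), φ γ (s z) = s z := by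
  have hcen : ∀ z : QuaternionGroup 2, z ∈ Subgroup.center (QuaternionGroup 2) →
      z = 1 ∨ z = QuaternionGroup.a 2 := by
    intro z hz
    rw [Subgroup.mem_center_iff] at hz
    revert z
    decide
  have hne : (QuaternionGroup.a 2 : QuaternionGroup 2) ≠ 1 := by decide
  have hsq : (QuaternionGroup.a 2 : QuaternionGroup 2) * QuaternionGroup.a 2 = 1 := by decide
  have hcomm : ∀ (x : Kˣ) (e : E), e * j x = j x * e := fun x e =>
    Subgroup.mem_center_iff.mp (hjcenter x) e
  have hdiff : ∀ e f : E, π e = π f → ∃ x : Kˣ, f = e * j x := by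
    intro e f h
    have : e⁻¹ * f ∈ π.ker := by
      rw [MonoidHom.mem_ker, map_mul, map_inv, h, inv_mul_cancel]
    rw [hker] at this
    obtain ⟨x, hx⟩ := this
    exact ⟨x, by rw [hx]; group⟩
  obtain ⟨u, hu⟩ := hπ (QuaternionGroup.a 1)
  obtain ⟨v, hv⟩ := hπ (QuaternionGroup.xa 0)
  obtain ⟨c, hc⟩ : ∃ c : E, u * v = c * (v * u) := ⟨u * v * (v * u)⁻¹, by group⟩
  have hπc : π c = QuaternionGroup.a 2 := by
    have h : c = u * v * (v * u)⁻¹ := by rw [hc]; group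
    rw [h]
    simp only [map_mul, map_inv, hu, hv]
    decide
  have hcu : c * u = u * c := by
    obtain ⟨x, rfl⟩ := hdiff (u * u) c (by rw [map_mul, hπc, hu]; decide)
    rw [mul_assoc (u * u), ← hcomm x u]
    simp only [mul_assoc]
  have hcv : c * v = v * c := by
    obtain ⟨x, rfl⟩ := hdiff (v * v) c (by rw [map_mul, hπc, hv]; decide)
    rw [mul_assoc (v * v), ← hcomm x v]
    simp only [mul_assoc]
  have huuv : u * u * v = v * (u * u) := by
    obtain ⟨x, hx⟩ := hdiff c (u * u) (by rw [map_mul, hπc, hu]; decide)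
    rw [hx, mul_assoc, ← hcomm x v, ← mul_assoc, hcv, mul_assoc]
  have hcc : c * c = 1 := by
    have h : u * u * v = c * c * (v * (u * u)) := by
      calc u * u * v = u * (u * v) := mul_assoc _ _ _
        _ = (u * c) * (v * u) := by rw [hc, mul_assoc]
        _ = c * (u * v) * u := by rw [← hcu]; simp only [mul_assoc]
        _ = _ := by rw [hc]; simp only [mul_assoc]
    rw [huuv] at h
    exact (mul_eq_right.mp h.symm)
  have hfix : ∀ γ : K ≃ₐ[k] K, φ γ c = c := by
    intro γ
    obtain ⟨x, hx⟩ := hdiff u (φ γ u) (hπequiv γ u).symm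
    obtain ⟨y, hy⟩ := hdiff v (φ γ v) (hπequiv γ v).symm
    have h := congrArg (φ γ) hc
    simp only [map_mul, hx, hy] at h
    have h1 : u * j x * (v * j y) = u * v * (j x * j y) := by
      rw [mul_assoc u, ← mul_assoc (j x), ← hcomm x v]; simp only [mul_assoc]
    have h2 : v * j y * (u * j x) = v * u * (j x * j y) := by
      rw [mul_assoc v, ← mul_assoc (j y), ← hcomm y u]
      have := hcomm y (j x)
      simp only [mul_assoc, this]
    rw [h1, h2, hc, mul_assoc c] at h
    exact (mul_right_cancel h).symm
  classical
  refine ⟨{ toFun := fun z => if (z : QuaternionGroup 2) = 1 then 1 else c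
            map_one' := by simp
            map_mul' := ?_ }, ?_, ?_⟩
  · rintro ⟨y, hy⟩ ⟨z, hz⟩
    rcases hcen y hy with rfl | rfl <;> rcases hcen z hz with rfl | rfl <;>
      simp only [MulMemClass.mk_mul_mk, hsq, hne, hcc, if_true, if_false, mul_one, one_mul]
  · rintro ⟨z, hz⟩
    rcases hcen z hz with rfl | rfl
    · simp
    · simp [hne, hπc]
  · rintro γ ⟨z, hz⟩
    rcases hcen z hz with rfl | rfl
    · simp
    · simp [hne, hfix]
end

section
/- Let H be a finite group of cardinality n, let E be a group and π : E → H a surjective group homomorphism whose kernel A = ker π is contained in the center of E. Assume A is n-divisible: for every a ∈ A there exists b ∈ A with bⁿ = a. Then there exists a subgroup E' of E such that π maps E' onto all of H and E' ∩ A equals the n-torsion subgroup {a ∈ A : aⁿ = 1} of A. (This expresses the surjectivity of Ext^c(H, μ_n) → Ext^c(H, G_m) used in the key lemma: every central extension of H by a divisible group is induced from a central extension by the n-torsion subgroup.) -/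
/-- Every central extension `1 → A → E → H → 1` of a finite group `H` of order `n` by an
`n`-divisible abelian group `A` is induced from a central extension by the `n`-torsion
subgroup of `A`: there is a subgroup `E'` of `E` surjecting onto `H` whose intersection
with `A` is exactly the `n`-torsion of `A`. -/
theorem central_extension_by_divisible_reduces_to_torsion
    (H : Type*) [Group H] [Finite H] (n : ℕ) (hn : Nat.card H = n)
    (E : Type*) [Group E] (π : E →* H) (hπ : Function.Surjective π)
    (hcentral : π.ker ≤ Subgroup.center E)
    (hdiv : ∀ a ∈ π.ker, ∃ b ∈ π.ker, b ^ n = a) :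
    ∃ E' : Subgroup E, (∀ h : H, ∃ e ∈ E', π e = h) ∧
      ∀ e : E, e ∈ E' ⊓ π.ker ↔ e ∈ π.ker ∧ e ^ n = 1 := by
  have hidx : π.ker.index = n := by
    rw [Subgroup.index_ker, MonoidHom.range_eq_top.mpr hπ, Subgroup.card_top, hn]
  haveI : π.ker.FiniteIndex := ⟨by rw [hidx, ← hn]; exact Nat.card_pos.ne'⟩
  letI : CommGroup π.ker :=
    { (inferInstance : Group π.ker) with
      mul_comm := fun a b => Subtype.ext
        ((Subgroup.mem_center_iff.mp (hcentral b.2)) a) }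
  have key : ∀ (k : ℕ) (g₀ g : E), g₀⁻¹ * g ^ k * g₀ ∈ π.ker → g₀⁻¹ * g ^ k * g₀ = g ^ k := by
    intro k g₀ g hk
    have h := Subgroup.mem_center_iff.mp (hcentral hk) g₀
    have h2 : g ^ k * g₀ = (g₀⁻¹ * g ^ k * g₀) * g₀ := by rw [← h]; group
    exact (mul_right_cancel h2).symm
  let f : E →* π.ker := MonoidHom.transfer (MonoidHom.id π.ker)
  have hf : ∀ g : E, ((f g : π.ker) : E) = g ^ n := by
    intro g
    have := MonoidHom.transfer_eq_pow (MonoidHom.id π.ker) g (fun k g₀ => key k g₀ g)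
    have h2 := congrArg (Subtype.val) this
    simpa [hidx] using h2
  have hmem : ∀ g : E, g ∈ f.ker ↔ g ^ n = 1 := by
    intro g
    rw [MonoidHom.mem_ker, ← hf g]
    exact ⟨fun h => by rw [h]; rfl, fun h => Subtype.ext h⟩
  refine ⟨f.ker, fun h => ?_, fun e => ?_⟩
  · obtain ⟨e, rfl⟩ := hπ h
    obtain ⟨b, hb, hbn⟩ := hdiv (e ^ n) (by rw [← hf e]; exact (f e).2)
    refine ⟨e * b⁻¹, ?_, ?_⟩
    · have hc : Commute e b := Subgroup.mem_center_iff.mp (hcentral hb) e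
      rw [hmem, hc.inv_right.mul_pow, inv_pow, hbn, mul_inv_cancel]
    · rw [map_mul, map_inv, MonoidHom.mem_ker.mp hb, inv_one, mul_one]
  · rw [Subgroup.mem_inf, hmem, and_comm]
end

section
/- For every prime p, every n ≥ 1, and every injective additive group homomorphism f : ℤ/p^nℤ → ℤ/p^{n+1}ℤ, the induced map f_* : Ext¹_ℤ(ℤ/pℤ, ℤ/p^nℤ) → Ext¹_ℤ(ℤ/pℤ, ℤ/p^{n+1}ℤ) on first Ext groups of ℤ-modules is the zero map. -/
open CategoryTheory

theorem mem_range_toAddCircle (m : ℕ) [NeZero m] (t : UnitAddCircle) (ht : m • t = 0) :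
    ∃ x : ZMod m, ZMod.toAddCircle x = t := by
  obtain ⟨r, rfl⟩ := QuotientAddGroup.mk_surjective t
  have hm : (m : ℝ) ≠ 0 := by exact_mod_cast NeZero.ne m
  have h : ((m • r : ℝ) : UnitAddCircle) = 0 := ht
  rw [AddCircle.coe_eq_zero_iff] at h
  obtain ⟨k, hk⟩ := h
  refine ⟨(k : ZMod m), ?_⟩
  rw [ZMod.toAddCircle_intCast]
  have : (k : ℝ) / m = r := by
    rw [div_eq_iff hm]; simp at hk; linarith
  rw [this]

theorem ext_zero_alg (p : ℕ) (hp : p.Prime) (n : ℕ) {P0 P1 P2 : ModuleCat.{0} ℤ} (d : P1 ⟶ P0)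
    (d2 : P2 ⟶ P1) (w : d2 ≫ d = 0) (hex : (ShortComplex.mk _ _ w).Exact)
    (π : P0 ⟶ ModuleCat.of ℤ (ZMod p)) (w' : d ≫ π = 0)
    (hex' : (ShortComplex.mk _ _ w').Exact)
    (f : ZMod (p ^ n) →+ ZMod (p ^ (n + 1))) (φ : P1 ⟶ ModuleCat.of ℤ (ZMod (p ^ n)))
    (hφ : d2 ≫ φ = 0) :
    ∃ ψ : P0 ⟶ ModuleCat.of ℤ (ZMod (p ^ (n + 1))),
      φ ≫ ModuleCat.ofHom f.toIntLinearMap = d ≫ ψ := by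
  have : NeZero (p ^ (n + 1)) := ⟨pow_ne_zero _ hp.ne_zero⟩
  rw [ShortComplex.moduleCat_exact_iff] at hex hex'
  have hker : ∀ x : P1, d.hom x = 0 → φ.hom x = 0 := by
    intro x hx
    obtain ⟨y, hy⟩ := hex x hx
    have hy : d2.hom y = x := hy
    rw [← hy]
    exact congrArg (fun g => g.hom y) hφ
  let q : (P1 ⧸ d.hom.toAddMonoidHom.ker) →+ UnitAddCircle :=
    QuotientAddGroup.lift _ ((ZMod.toAddCircle.comp f).comp φ.hom.toAddMonoidHom) (by
      intro x hx
      have h : φ.hom x = 0 := hker x hx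
      change ZMod.toAddCircle (f (φ.hom x)) = 0
      rw [h]; simp)
  obtain ⟨g, hg⟩ := (Module.Baer.of_divisible UnitAddCircle).extension_property_addMonoidHom
    (QuotientAddGroup.kerLift d.hom.toAddMonoidHom) (QuotientAddGroup.kerLift_injective _) q
  have hg' : ∀ x : P1, g (d.hom x) = ZMod.toAddCircle (f (φ.hom x)) := fun x =>
    DFunLike.congr_fun hg (QuotientAddGroup.mk x)
  have htors : ∀ y : P0, (p ^ (n + 1)) • g y = 0 := by
    intro y
    have h1 : π.hom (p • y) = 0 := by
      rw [map_nsmul]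
      change p • (π.hom y : ZMod p) = 0
      simp
    obtain ⟨x, hx⟩ := hex' (p • y) h1
    have hx : d.hom x = p • y := hx
    rw [pow_succ, mul_smul, ← map_nsmul g, ← hx, hg', ← map_nsmul, ← map_nsmul]
    have : p ^ n • (φ.hom x : ZMod (p ^ n)) = 0 := by simp
    rw [this]; simp
  choose ψ hψ using fun y => mem_range_toAddCircle (p ^ (n + 1)) (g y) (htors y)
  let Ψ : P0 →+ ZMod (p ^ (n + 1)) := AddMonoidHom.mk' ψ (by
    intro a b
    apply ZMod.toAddCircle_injective
    rw [map_add, hψ, hψ, hψ, map_add])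
  have hfin : ∀ x : P1, f (φ.hom x) = ψ (d.hom x) := by
    intro x
    apply ZMod.toAddCircle_injective
    rw [hψ, hg']
  refine ⟨ModuleCat.ofHom { Ψ with map_smul' := fun c x => by simpa using map_intCast_smul Ψ ℤ ℤ c x }, ?_⟩
  apply ModuleCat.hom_ext
  apply LinearMap.ext
  exact hfin

theorem ext_pushforward_zero
    (p : ℕ) (hp : p.Prime) (n : ℕ) (hn : 1 ≤ n)
    (f : ZMod (p ^ n) →+ ZMod (p ^ (n + 1))) (hf : Function.Injective f) :
    ((Ext ℤ (ModuleCat ℤ) 1).obj (Opposite.op (ModuleCat.of ℤ (ZMod p)))).map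
      (ModuleCat.ofHom f.toIntLinearMap) = 0 := by
  let P := projectiveResolution (ModuleCat.of ℤ (ZMod p))
  let α := ((linearYoneda ℤ (ModuleCat ℤ)).map (ModuleCat.ofHom f.toIntLinearMap)).rightOp
  have key : (NatTrans.leftDerived α 1).app (ModuleCat.of ℤ (ZMod p)) = 0 := by
    rw [P.leftDerived_app_eq]
    suffices h : HomologicalComplex.homologyMap
        ((NatTrans.mapHomologicalComplex α (ComplexShape.down ℕ)).app P.complex) 1 = 0 by
      have h' : (HomologicalComplex.homologyFunctor (ModuleCat ℤ)ᵒᵖ (ComplexShape.down ℕ) 1).map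
        ((NatTrans.mapHomologicalComplex α _).app P.complex) = 0 := h
      rw [h']; simp
    rw [← cancel_mono (HomologicalComplex.homologyι _ _),
      ← cancel_epi (HomologicalComplex.homologyπ _ _), HomologicalComplex.homologyι_naturality,
      HomologicalComplex.homology_π_ι_assoc, HomologicalComplex.p_opcyclesMap,
      Limits.zero_comp, Limits.comp_zero]
    have e1 := HomologicalComplex.iCycles_d (((((linearYoneda ℤ (ModuleCat ℤ)).obj (ModuleCat.of ℤ (ZMod (p ^ (n + 1))))).rightOp).mapHomologicalComplex (ComplexShape.down ℕ)).obj P.complex) 1 0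
    have e2 := HomologicalComplex.d_pOpcycles (((((linearYoneda ℤ (ModuleCat ℤ)).obj (ModuleCat.of ℤ (ZMod (p ^ n)))).rightOp).mapHomologicalComplex (ComplexShape.down ℕ)).obj P.complex) 2 1
    apply Quiver.Hom.unop_inj
    replace e1 := congrArg Quiver.Hom.unop e1
    replace e2 := congrArg Quiver.Hom.unop e2
    apply ModuleCat.hom_ext
    apply LinearMap.ext
    intro x
    obtain ⟨ψ, hψ⟩ := ext_zero_alg p hp n (P.complex.d 1 0) (P.complex.d 2 1) (by simp)
      (P.exact_succ 0) (P.π.f 0) P.complex_d_comp_π_f_zero P.exact₀ f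
      ((HomologicalComplex.pOpcycles (((((linearYoneda ℤ (ModuleCat ℤ)).obj
        (ModuleCat.of ℤ (ZMod (p ^ n)))).rightOp).mapHomologicalComplex
          (ComplexShape.down ℕ)).obj P.complex) 1).unop.hom x)
      (congrArg (fun g => g.hom x) e2)
    refine Eq.trans ?_ (congrArg (fun g => g.hom ψ) e1)
    exact congrArg (HomologicalComplex.iCycles (((((linearYoneda ℤ (ModuleCat ℤ)).obj
        (ModuleCat.of ℤ (ZMod (p ^ (n + 1))))).rightOp).mapHomologicalComplex
          (ComplexShape.down ℕ)).obj P.complex) 1).unop.hom hψ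
  exact congrArg Quiver.Hom.unop key
end

section
/- Let p be a prime, n ≥ 1, and H a finite group of cardinality p^n with a cyclic subgroup Z of order p contained in the center of H. Let k be a field of characteristic 0 containing a primitive p^{n+1}-th root of unity. Then there exist a natural number d which is a power of p and an injective group homomorphism ρ : H → SL_d(k) such that ρ(z) lies in the center of SL_d(k) (i.e. is a scalar matrix) for every z ∈ Z. (The representation can be taken to be the one induced from a faithful 1-dimensional representation of Z, of dimension d = [H : Z], suitably twisted to have determinant 1.) -/
section Aux
open Classical

noncomputable def auxChi {H k : Type*} [Group H] [Field k] (Z : Subgroup H) (χ : Z →* kˣ) (h : H) : k :=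
  if hh : h ∈ Z then (χ ⟨h, hh⟩ : k) else 0

theorem auxChi_mul {H k : Type*} [Group H] [Field k] (Z : Subgroup H) (χ : Z →* kˣ) (a b : H)
    (hb : b ∈ Z) : auxChi Z χ (a * b) = auxChi Z χ a * auxChi Z χ b := by
  unfold auxChi
  by_cases ha : a ∈ Z
  · rw [dif_pos ha, dif_pos hb, dif_pos (Z.mul_mem ha hb), ← Units.val_mul, ← map_mul]
    rfl
  · rw [dif_neg ha, dif_neg (fun h => ha ((Subgroup.mul_mem_cancel_right Z hb).1 h)), zero_mul]

noncomputable def auxM {H k : Type*} [Group H] [Field k] (Z : Subgroup H) [Fintype (H ⧸ Z)]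
    (χ : Z →* kˣ) : H →* Matrix (H ⧸ Z) (H ⧸ Z) k where
  toFun h := Matrix.of fun q q' => auxChi Z χ (q.out⁻¹ * h * q'.out)
  map_one' := by
    ext q q'
    rw [Matrix.of_apply, mul_one, Matrix.one_apply]
    split_ifs with h
    · subst h
      rw [inv_mul_cancel, auxChi, dif_pos Z.one_mem]
      exact congrArg Units.val (map_one χ)
    · rw [auxChi, dif_neg]
      intro h'
      apply h
      rw [← QuotientGroup.eq] at h'
      simpa using h'
  map_mul' g h := by
    ext q q'
    rw [Matrix.mul_apply, Finset.sum_eq_single ((h * q'.out : H) : H ⧸ Z)]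
    · simp only [Matrix.of_apply]
      rw [← auxChi_mul]
      · congr 1
        group
      · rw [mul_assoc, ← QuotientGroup.eq]
        simp
    · intro b _ hb
      simp only [Matrix.of_apply]
      convert mul_zero _
      rw [auxChi, dif_neg]
      intro h'
      apply hb
      rw [mul_assoc, ← QuotientGroup.eq] at h'
      simpa using h'
    · simp

theorem auxM_central {H k : Type*} [Group H] [Field k] (Z : Subgroup H) [Fintype (H ⧸ Z)]
    (χ : Z →* kˣ) (hZ : Z ≤ Subgroup.center H) (z : H) (hz : z ∈ Z) :
    auxM Z χ z = auxChi Z χ z • (1 : Matrix (H ⧸ Z) (H ⧸ Z) k) := by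
  rw [← map_one (auxM Z χ)]
  ext q q'
  simp only [auxM, MonoidHom.coe_mk, OneHom.coe_mk, Matrix.of_apply, Matrix.smul_apply, smul_eq_mul]
  have h := Subgroup.mem_center_iff.1 (hZ hz) q'.out
  rw [mul_assoc, ← h, ← mul_assoc, auxChi_mul _ _ _ _ hz, mul_comm, mul_one]

theorem auxM_inj {H k : Type*} [Group H] [Field k] (Z : Subgroup H) [Fintype (H ⧸ Z)]
    (χ : Z →* kˣ) (hχ : Function.Injective χ) (hZ : Z ≤ Subgroup.center H) (h : H)
    (hh : auxM Z χ h = 1) : h = 1 := by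
  have h1 := congrFun (congrFun hh ((1 : H) : H ⧸ Z)) ((1 : H) : H ⧸ Z)
  rw [Matrix.one_apply_eq] at h1
  have hz : h ∈ Z := by
    simp only [auxM, MonoidHom.coe_mk, OneHom.coe_mk, Matrix.of_apply, auxChi] at h1
    split_ifs at h1 with h2
    · set s := (((1 : H) : H ⧸ Z)).out
      have h3 := Subgroup.mem_center_iff.1 (hZ h2) s
      have : h = s⁻¹ * h * s := by
        have h4 : s * (s⁻¹ * h * s) = h * s := by group
        rw [h4] at h3
        exact mul_right_cancel (h3.trans rfl)
      rw [this]; exact h2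
    · simp at h1
  rw [auxM_central Z χ hZ h hz, Matrix.smul_apply, Matrix.one_apply_eq, smul_eq_mul, mul_one,
    auxChi, dif_pos hz, Units.val_eq_one] at h1
  have := hχ (h1.trans (map_one χ).symm)
  exact congrArg Subtype.val this

end Aux

/-- Let `H` be a group of order `p^n` with a central cyclic subgroup `Z` of order `p`,
and `k` a field of characteristic `0` containing a primitive `p^(n+1)`-th root of unity.
Then `H` has a faithful representation `ρ : H → SL_d(k)` with `d` a power of `p`, whose
restriction to `Z` takes values in the center of `SL_d(k)`. -/
theorem exists_faithful_sl_rep_central_on_Z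
    (p n : ℕ) (hp : p.Prime) (hn : 1 ≤ n)
    (H : Type*) [Group H] (hH : Nat.card H = p ^ n)
    (Z : Subgroup H) (hZcyc : IsCyclic Z) (hZcard : Nat.card Z = p)
    (hZcenter : Z ≤ Subgroup.center H)
    (k : Type*) [Field k] [CharZero k]
    (ζ : k) (hζ : IsPrimitiveRoot ζ (p ^ (n + 1))) :
    ∃ (d m : ℕ) (ρ : H →* Matrix.SpecialLinearGroup (Fin d) k),
      d = p ^ m ∧ Function.Injective ρ ∧
      ∀ z ∈ Z, ρ z ∈ Subgroup.center (Matrix.SpecialLinearGroup (Fin d) k) := by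
  classical
  have hppos := hp.pos
  haveI : Finite H := Nat.finite_of_card_ne_zero (by rw [hH]; positivity)
  haveI : Fintype (H ⧸ Z) := Fintype.ofFinite _
  have hη : IsPrimitiveRoot (ζ ^ (p ^ n)) p := hζ.pow (by positivity) (pow_succ p n)
  obtain ⟨u, hu⟩ := hη.isUnit hp.ne_zero
  have hu' : IsPrimitiveRoot u p := by
    rw [← IsPrimitiveRoot.coe_units_iff, hu]; exact hη
  obtain ⟨χ, hχ⟩ : ∃ χ : Z →* kˣ, Function.Injective χ := by
    have hc : Nat.card Z = Nat.card (Subgroup.zpowers u) := by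
      rw [hZcard, Nat.card_zpowers, hu'.eq_orderOf]
    exact ⟨(Subgroup.zpowers u).subtype.comp (mulEquivOfCyclicCardEq hc).toMonoidHom,
      Subtype.val_injective.comp (mulEquivOfCyclicCardEq hc).injective⟩
  have hcard : Fintype.card ((H ⧸ Z) × Fin (p ^ n)) = p ^ (n - 1 + n) := by
    have h1 := Z.card_eq_card_quotient_mul_card_subgroup
    rw [hH, hZcard, Nat.card_eq_fintype_card] at h1
    rw [Fintype.card_prod, Fintype.card_fin, pow_add]
    congr 1
    apply Nat.eq_of_mul_eq_mul_right hppos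
    rw [← h1, ← pow_succ, Nat.sub_add_cancel hn]
  let e : (H ⧸ Z) × Fin (p ^ n) ≃ Fin (p ^ (n - 1 + n)) := Fintype.equivFinOfCardEq hcard
  let B : Matrix (H ⧸ Z) (H ⧸ Z) k →* Matrix (Fin (p ^ (n - 1 + n))) (Fin (p ^ (n - 1 + n))) k :=
    { toFun := fun M => Matrix.reindexAlgEquiv k k e (Matrix.blockDiagonal fun _ => M)
      map_one' := by
        have : (Matrix.blockDiagonal fun _ : Fin (p ^ n) => (1 : Matrix (H ⧸ Z) (H ⧸ Z) k)) = 1 :=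
          Matrix.blockDiagonal_one
        rw [this, map_one]
      map_mul' := fun M N => by rw [Matrix.blockDiagonal_mul, map_mul] }
  have hB : ∀ M, B M = Matrix.reindexAlgEquiv k k e (Matrix.blockDiagonal fun _ => M) := fun _ => rfl
  have hdet : ∀ h, (B (auxM Z χ h)).det = 1 := by
    intro h
    rw [hB, Matrix.det_reindexAlgEquiv, Matrix.det_blockDiagonal, Finset.prod_const,
      Finset.card_univ, Fintype.card_fin, ← Matrix.det_pow, ← map_pow, ← hH, pow_card_eq_one',
      map_one, Matrix.det_one]
  have hBinj : ∀ M, B M = 1 → M = 1 := by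
    intro M hM
    rw [hB, map_eq_one_iff _ (Matrix.reindexAlgEquiv k k e).injective] at hM
    have h1 : (fun _ : Fin (p ^ n) => M) = 1 :=
      Matrix.blockDiagonal_injective (hM.trans Matrix.blockDiagonal_one.symm)
    exact congrFun h1 ⟨0, by positivity⟩
  refine ⟨p ^ (n - 1 + n), n - 1 + n,
    { toFun := fun h => ⟨B (auxM Z χ h), hdet h⟩
      map_one' := by ext1; simp
      map_mul' := fun a b => by apply Subtype.ext; simp only [map_mul]; rfl }, rfl, ?_, ?_⟩
  · rw [injective_iff_map_eq_one]
    intro h hh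
    exact auxM_inj Z χ hχ hZcenter h (hBinj _ (congrArg Subtype.val hh))
  · intro z hz
    have hs : B (auxM Z χ z) = auxChi Z χ z • 1 := by
      have : (fun _ : Fin (p ^ n) => auxChi Z χ z • (1 : Matrix (H ⧸ Z) (H ⧸ Z) k))
        = auxChi Z χ z • 1 := rfl
      rw [auxM_central Z χ hZcenter z hz, hB, this, Matrix.blockDiagonal_smul, map_smul,
        Matrix.blockDiagonal_one, map_one]
    rw [Subgroup.mem_center_iff]
    intro g
    apply Subtype.ext
    change g.1 * B (auxM Z χ z) = B (auxM Z χ z) * g.1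
    rw [hs]
    simp
end

section
/- Let E be a group of cardinality 64 containing a subgroup C which is cyclic of cardinality 8, is contained in the center of E, and such that the quotient group E/C is isomorphic to the quaternion group Q₈ of order 8. Then E is isomorphic either to the direct product (ℤ/8ℤ) × Q₈, or to the group presented by generators a, b with relations a¹⁶ = 1, b⁴ = 1, a⁻¹b⁻¹ab = b² (the group numbered 44 among groups of order 64 in the GAP classification). -/
/-- The relators `a¹⁶`, `b⁴`, `⁅a,b⁆·b⁻²` of the group numbered 44 in the GAP
classification of groups of order 64, inside the free group on two generators
(`a = FreeGroup.of 0`, `b = FreeGroup.of 1`). -/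
def g44Rels : Set (FreeGroup (Fin 2)) :=
  {FreeGroup.of 0 ^ 16, FreeGroup.of 1 ^ 4,
    (FreeGroup.of 0)⁻¹ * (FreeGroup.of 1)⁻¹ * FreeGroup.of 0 * FreeGroup.of 1 *
      (FreeGroup.of 1 ^ 2)⁻¹}

section aux

theorem aux_pg_card : Finite (PresentedGroup g44Rels) ∧ Nat.card (PresentedGroup g44Rels) ≤ 64 := by
  set a : PresentedGroup g44Rels := PresentedGroup.of 0 with ha
  set b : PresentedGroup g44Rels := PresentedGroup.of 1 with hb
  have h1 : a ^ 16 = 1 := by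
    have := PresentedGroup.one_of_mem (rels := g44Rels) (x := FreeGroup.of 0 ^ 16) (by simp [g44Rels])
    simp only [map_mul, map_inv, map_pow] at this
    exact this
  have h2 : b ^ 4 = 1 := by
    have := PresentedGroup.one_of_mem (rels := g44Rels) (x := FreeGroup.of 1 ^ 4) (by simp [g44Rels])
    simp only [map_mul, map_inv, map_pow] at this
    exact this
  have h3 : a⁻¹ * b⁻¹ * a * b * (b ^ 2)⁻¹ = 1 := by
    have := PresentedGroup.one_of_mem (rels := g44Rels)
      (x := (FreeGroup.of 0)⁻¹ * (FreeGroup.of 1)⁻¹ * FreeGroup.of 0 * FreeGroup.of 1 *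
      (FreeGroup.of 1 ^ 2)⁻¹) (by simp [g44Rels])
    simp only [map_mul, map_inv, map_pow] at this
    exact this
  have h4 : a⁻¹ * b⁻¹ * a = b := by
    have : a⁻¹ * b⁻¹ * a * b = b ^ 2 := mul_inv_eq_one.mp h3
    rw [pow_two] at this
    exact mul_right_cancel this
  have h5 : ∀ k : ℤ, b ^ k * a = a * b ^ (-k) := by
    intro k
    have h : SemiconjBy a b b⁻¹ := by
      show a * b = b⁻¹ * a
      have h' : a * (a⁻¹ * b⁻¹ * a) = a * b := by rw [h4]
      rw [← h']; group
    have := (h.zpow_right (-k)).eq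
    rw [inv_zpow', neg_neg] at this
    exact this.symm
  have h6 : ∀ (n : ℕ) (k : ℤ), ∃ l : ℤ, b ^ k * a ^ n = a ^ n * b ^ l := by
    intro n
    induction n with
    | zero => intro k; exact ⟨k, by simp⟩
    | succ n ih =>
      intro k
      obtain ⟨l, hl⟩ := ih k
      refine ⟨-l, ?_⟩
      rw [pow_succ, ← mul_assoc, hl, mul_assoc, h5, mul_assoc]
  have h7 : ∀ g : PresentedGroup g44Rels, ∃ (n : ℕ) (k : ℤ), g = a ^ n * b ^ k := by
    intro g
    have hg : g ∈ Subgroup.closure (Set.range (PresentedGroup.of (rels := g44Rels))) := by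
      rw [PresentedGroup.closure_range_of]; trivial
    have ha' : a⁻¹ = a ^ 15 := by
      rw [inv_eq_iff_mul_eq_one, ← pow_succ', h1]
    induction hg using Subgroup.closure_induction_right with
    | one => exact ⟨0, 0, by simp⟩
    | mul_right x hx y hy ih =>
      obtain ⟨n, k, rfl⟩ := ih
      obtain ⟨i, rfl⟩ := hy
      fin_cases i
      · refine ⟨n + 1, -k, ?_⟩
        have := h5 k
        show a ^ n * b ^ k * a = _
        rw [mul_assoc, this, pow_succ, mul_assoc]
      · refine ⟨n, k + 1, ?_⟩
        show a ^ n * b ^ k * b = _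
        rw [zpow_add_one, mul_assoc]
    | mul_inv_cancel x hx y hy ih =>
      obtain ⟨n, k, rfl⟩ := ih
      obtain ⟨i, rfl⟩ := hy
      fin_cases i
      · obtain ⟨l, hl⟩ := h6 15 k
        refine ⟨n + 15, l, ?_⟩
        show a ^ n * b ^ k * a⁻¹ = _
        rw [ha', mul_assoc, hl, pow_add, mul_assoc]
      · refine ⟨n, k - 1, ?_⟩
        show a ^ n * b ^ k * b⁻¹ = _
        rw [zpow_sub_one, mul_assoc]
  have hs : Function.Surjective (fun p : Fin 16 × Fin 4 => a ^ (p.1 : ℕ) * b ^ (p.2 : ℕ)) := by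
    intro g
    obtain ⟨n, k, rfl⟩ := h7 g
    refine ⟨(⟨n % 16, Nat.mod_lt _ (by norm_num)⟩, ⟨(k % 4).toNat, by omega⟩), ?_⟩
    simp only
    congr 1
    · exact (pow_eq_pow_mod n h1).symm
    · rw [← zpow_natCast, Int.toNat_of_nonneg (by omega)]
      conv_rhs => rw [← Int.emod_add_mul_ediv k 4, zpow_add, zpow_mul]
      have : b ^ (4 : ℤ) = 1 := by exact_mod_cast h2
      rw [this]; simp
  have := Nat.card_le_card_of_surjective _ hs
  exact ⟨Finite.of_surjective _ hs, by simpa using this⟩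

/-- The nonsplit case. -/
theorem aux_C {E : Type*} [Group E] (hE : Nat.card E = 64) (x y z : E)
    (hz : ∀ g, g * z = z * g) (hz8 : z ^ 8 = 1)
    (h1 : x ^ 2 = y ^ 2 * z) (h2 : y * x = x⁻¹ * y)
    (hgen : ∀ K : Subgroup E, z ∈ K → x ∈ K → y ∈ K → K = ⊤) :
    Nonempty (E ≃* PresentedGroup g44Rels) := by
  have hyx2 : y * x ^ 2 = x ^ 2 * y := by
    rw [h1, mul_assoc, ← hz y]; simp only [pow_two, mul_assoc]
  have hyx2' : y * x ^ 2 = (x ^ 2)⁻¹ * y := by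
    rw [pow_two, ← mul_assoc, h2, mul_assoc, h2]; group
  have hx4 : x ^ 4 = 1 := by
    have := mul_right_cancel (hyx2.symm.trans hyx2')
    rw [eq_inv_iff_mul_eq_one, ← pow_add] at this
    exact this
  have hy16 : y ^ 16 = 1 := by
    have hc : Commute (y ^ 2) z := hz _
    have : (x ^ 2) ^ 8 = (y ^ 2) ^ 8 * z ^ 8 := by rw [h1, hc.mul_pow]
    rw [hz8, ← pow_mul, ← pow_mul, mul_one] at this
    have h : x ^ (2 * 8) = (x ^ 4) ^ 4 := by rw [← pow_mul]
    rw [h, hx4, one_pow] at this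
    exact this.symm
  have hrel : ∀ r ∈ g44Rels, FreeGroup.lift ![y, x] r = 1 := by
    intro r hr
    simp only [g44Rels, Set.mem_insert_iff, Set.mem_singleton_iff] at hr
    rcases hr with rfl | rfl | rfl
    · simpa using hy16
    · simpa using hx4
    · simp only [map_mul, map_inv, map_pow, FreeGroup.lift_apply_of, Matrix.cons_val_zero,
        Matrix.cons_val_one]
      have : x⁻¹ * y = y * x := h2.symm
      rw [mul_assoc y⁻¹, this]; group
  let f := PresentedGroup.toGroup hrel
  have hf : Function.Surjective f := by
    rw [← MonoidHom.range_eq_top]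
    have hy : y ∈ f.range := ⟨PresentedGroup.of 0, by simp [f]⟩
    have hx : x ∈ f.range := ⟨PresentedGroup.of 1, by simp [f]⟩
    refine hgen _ ?_ hx hy
    have : z = (y ^ 2)⁻¹ * x ^ 2 := by rw [h1]; group
    rw [this]
    exact mul_mem (inv_mem (pow_mem hy _)) (pow_mem hx _)
  have : Finite E := Nat.finite_of_card_ne_zero (by omega)
  have hfin : Finite (PresentedGroup g44Rels) := aux_pg_card.1
  have hb := hf.bijective_of_nat_card_le (by rw [hE]; exact aux_pg_card.2)
  exact ⟨(MulEquiv.ofBijective f hb).symm⟩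

/-- The split case. -/
theorem aux_B {E : Type*} [Group E] (hE : Nat.card E = 64) (x y z : E)
    (hz : ∀ g, g * z = z * g) (hz8 : z ^ 8 = 1)
    (h1 : x ^ 2 = y ^ 2) (h2 : y * x = x⁻¹ * y)
    (hgen : ∀ K : Subgroup E, z ∈ K → x ∈ K → y ∈ K → K = ⊤) :
    Nonempty (E ≃* (Multiplicative (ZMod 8) × QuaternionGroup 2)) := by
  have hyx2 : y * x ^ 2 = x ^ 2 * y := by
    rw [h1]; simp only [pow_two, mul_assoc]
  have hyx2' : y * x ^ 2 = (x ^ 2)⁻¹ * y := by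
    rw [pow_two, ← mul_assoc, h2, mul_assoc, h2]; group
  have hx4 : x ^ 4 = 1 := by
    have := mul_right_cancel (hyx2.symm.trans hyx2')
    rw [eq_inv_iff_mul_eq_one, ← pow_add] at this
    exact this
  have hxy : x * y = y * x⁻¹ := by
    rw [eq_mul_inv_iff_mul_eq, mul_assoc, h2]; group
  let p : ZMod (2 * 2) → E := fun i => x ^ i.val
  have hp : ∀ i j, p (i + j) = p i * p j := by
    intro i j
    simp only [p]
    rw [ZMod.val_add, ← pow_add]
    exact (pow_eq_pow_mod _ hx4).symm
  have hp0 : p 0 = 1 := by simp [p]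
  have hpn : ∀ i, p (-i) = (p i)⁻¹ := by
    intro i
    rw [eq_inv_iff_mul_eq_one, ← hp]; simp [hp0]
  have hpy : ∀ i, p i * y = y * p (-i) := by
    intro i
    rw [hpn]
    have : SemiconjBy y x⁻¹ x := hxy.symm
    have := (this.pow_right i.val).eq
    simp only [p]
    rw [← this, inv_pow]
  have hyy : y * y = p 2 := by
    rw [← pow_two, ← h1]; rfl
  let s : QuaternionGroup 2 →* E := MonoidHom.mk' (fun q => match q with
      | QuaternionGroup.a i => p i
      | QuaternionGroup.xa i => y * p i) (by
    rintro (i | i) (j | j)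
    · simp only [QuaternionGroup.a_mul_a, hp]
    · simp only [QuaternionGroup.a_mul_xa]
      rw [← mul_assoc, hpy, mul_assoc, ← hp]; congr 2; ring
    · simp only [QuaternionGroup.xa_mul_a, hp, mul_assoc]
    · simp only [QuaternionGroup.xa_mul_xa]
      rw [mul_assoc, ← mul_assoc (p i), hpy, mul_assoc, ← mul_assoc, hyy, ← hp, ← hp]
      congr 1
      push_cast
      ring)
  let t : Multiplicative (ZMod 8) →* E := MonoidHom.mk' (fun i => z ^ (Multiplicative.toAdd i).val) (by
    intro i j
    simp only [toAdd_mul]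
    rw [ZMod.val_add, ← pow_add]
    exact (pow_eq_pow_mod _ hz8).symm)
  have hts : ∀ i q, Commute (t i) (s q) := by
    intro i q
    have : Commute z (s q) := (hz _).symm
    exact this.pow_left _
  let f := MonoidHom.noncommCoprod t s hts
  have hf : Function.Surjective f := by
    rw [← MonoidHom.range_eq_top]
    refine hgen _ ⟨(Multiplicative.ofAdd 1, 1), ?_⟩ ⟨(1, QuaternionGroup.a 1), ?_⟩
      ⟨(1, QuaternionGroup.xa 0), ?_⟩
    · simp only [f, MonoidHom.noncommCoprod_apply, map_one, mul_one]
      exact pow_one z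
    · simp only [f, MonoidHom.noncommCoprod_apply, map_one, one_mul]
      exact pow_one x
    · simp only [f, MonoidHom.noncommCoprod_apply, map_one, one_mul]
      show y * p 0 = y
      rw [hp0, mul_one]
  have hb := hf.bijective_of_nat_card_le (by
    rw [hE, Nat.card_prod]; simp [Nat.card_eq_fintype_card, QuaternionGroup.card])
  exact ⟨(MulEquiv.ofBijective f hb).symm⟩

theorem aux_A {E : Type*} [Group E] (hE : Nat.card E = 64) (x y z : E)
    (hz : ∀ g, g * z = z * g) (hz8 : z ^ 8 = 1) (m n : ℤ)
    (h1 : x ^ 2 = y ^ 2 * z ^ m) (h2 : y * x = x⁻¹ * y * z ^ (2 * n))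
    (hgen : ∀ K : Subgroup E, z ∈ K → x ∈ K → y ∈ K → K = ⊤) :
    Nonempty (E ≃* (Multiplicative (ZMod 8) × QuaternionGroup 2)) ∨
      Nonempty (E ≃* PresentedGroup g44Rels) := by
  have hzk : ∀ (k : ℤ) g, Commute g (z ^ k) := fun k g => 
    (show Commute g z from hz g).zpow_right k
  have h2' : ∀ k : ℤ, (y * z ^ k) * (x * z ^ (-n)) = (x * z ^ (-n))⁻¹ * (y * z ^ k) := by
    intro k
    calc (y * z ^ k) * (x * z ^ (-n)) = (y * x) * (z ^ k * z ^ (-n)) := 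
          (hzk k x).symm.mul_mul_mul_comm _ _
      _ = x⁻¹ * y * (z ^ (2 * n) * (z ^ k * z ^ (-n))) := by rw [h2, mul_assoc (x⁻¹ * y)]
      _ = x⁻¹ * y * (z ^ n * z ^ k) := by congr 1; simp only [← zpow_add]; congr 1; ring
      _ = (x⁻¹ * z ^ n) * (y * z ^ k) := (hzk n y).mul_mul_mul_comm _ _
      _ = _ := by
        congr 1
        rw [mul_inv_rev, zpow_neg, inv_inv]
        exact (hzk n _).eq
  have hx2 : (x * z ^ (-n)) ^ 2 = y ^ 2 * z ^ (m - 2 * n) := by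
    rw [(hzk _ x).mul_pow, h1, mul_assoc, ← zpow_natCast (z ^ (-n)), ← zpow_mul, ← zpow_add]
    congr 2; push_cast; ring
  have hy2 : ∀ k : ℤ, (y * z ^ k) ^ 2 = y ^ 2 * z ^ (2 * k) := by
    intro k
    rw [(hzk _ y).mul_pow, ← zpow_natCast (z ^ k), ← zpow_mul]
    congr 2; push_cast; ring
  have hgen' : ∀ k : ℤ, ∀ K : Subgroup E, z ∈ K → x * z ^ (-n) ∈ K → y * z ^ k ∈ K → K = ⊤ := by
    intro k K hzK hxK hyK
    refine hgen K hzK ?_ ?_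
    · exact (Subgroup.mul_mem_cancel_right K (zpow_mem hzK _)).mp hxK
    · exact (Subgroup.mul_mem_cancel_right K (zpow_mem hzK _)).mp hyK
  rcases Int.even_or_odd' m with ⟨k, rfl | rfl⟩
  · left
    refine aux_B hE (x * z ^ (-n)) (y * z ^ (k - n)) z hz hz8 ?_ (h2' _) (hgen' _)
    rw [hx2, hy2]; congr 2; ring
  · right
    refine aux_C hE (x * z ^ (-n)) (y * z ^ (k - n)) z hz hz8 ?_ (h2' _) (hgen' _)
    rw [hx2, hy2, mul_assoc, ← zpow_add_one]; congr 2; ring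

end aux

theorem aux_D {E : Type*} [Group E] (hE : Nat.card E = 64) (x y z : E)
    (hz : ∀ g, g * z = z * g) (hz8 : z ^ 8 = 1) (m n : ℤ)
    (h1 : x ^ 2 = y ^ 2 * z ^ m) (h2 : y * x = x⁻¹ * y * z ^ n)
    (hgen : ∀ K : Subgroup E, z ∈ K → x ∈ K → y ∈ K → K = ⊤) :
    Nonempty (E ≃* (Multiplicative (ZMod 8) × QuaternionGroup 2)) ∨
      Nonempty (E ≃* PresentedGroup g44Rels) := by
  have hzk : ∀ (k : ℤ) g, Commute g (z ^ k) := fun k g => 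
    (show Commute g z from hz g).zpow_right k
  have h1' : y ^ 2 = x ^ 2 * z ^ (-m) := by rw [h1, zpow_neg, mul_inv_cancel_right]
  have hxyx : x * y * x = y * z ^ n := by rw [mul_assoc, h2]; group
  have h3 : x * y = y⁻¹ * x * z ^ (n - m) := by
    have e1 : x * y = y * z ^ n * x⁻¹ := by rw [← hxyx]; group
    have e2 : y = y⁻¹ * x ^ 2 * z ^ (-m) := by rw [mul_assoc, ← h1']; group
    calc x * y = y * z ^ n * x⁻¹ := e1
      _ = y * x⁻¹ * z ^ n := by rw [mul_assoc, ← (hzk n x⁻¹).eq, mul_assoc]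
      _ = (y⁻¹ * x ^ 2 * z ^ (-m)) * x⁻¹ * z ^ n := by rw [← e2]
      _ = (y⁻¹ * x ^ 2) * (x⁻¹ * z ^ (-m)) * z ^ n := by
        rw [(hzk (-m) x⁻¹).eq]; simp only [mul_assoc]
      _ = _ := by rw [sub_eq_neg_add, zpow_add]; group
  rcases Int.even_or_odd' n with ⟨k, rfl | rfl⟩
  · exact aux_A hE x y z hz hz8 m k h1 h2 hgen
  rcases Int.even_or_odd' m with ⟨l, rfl | rfl⟩
  · -- use (x*y, y)
    refine aux_A hE (x * y) y z hz hz8 (2 * k + 1) (2 * k + 1 - l) ?_ ?_ ?_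
    · rw [pow_two, ← mul_assoc, hxyx, pow_two, mul_assoc, mul_assoc, ← (hzk _ y).eq]
    · have e1 : y⁻¹ * (y * x) = y⁻¹ * (x⁻¹ * y * z ^ (2 * k + 1)) := by rw [h2]
      have e2 : (x * y)⁻¹ * y = x * z ^ (-(2 * k + 1)) := by
        rw [zpow_neg, eq_mul_inv_iff_mul_eq, mul_inv_rev]
        rw [inv_mul_cancel_left] at e1
        refine Eq.trans ?_ e1.symm
        simp only [mul_assoc]
      rw [e2, h3, mul_assoc x, ← zpow_add, mul_assoc y⁻¹, mul_inv_cancel_left]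
      congr 2; ring
    · intro K hzK hxK hyK
      exact hgen K hzK ((Subgroup.mul_mem_cancel_right K hyK).mp hxK) hyK
  · refine aux_A hE y x z hz hz8 (-(2 * l + 1)) (k - l) h1' ?_ (fun K a b c => hgen K a c b)
    rw [h3]; congr 2; ring

/-- A group of order 64 which is a central extension of `Q₈` by a cyclic group of order 8
is isomorphic either to `(ℤ/8ℤ) × Q₈` or to the presented group
`⟨a, b ∣ a¹⁶ = b⁴ = 1, a⁻¹b⁻¹ab = b²⟩` (number 44 of order 64 in GAP). -/
theorem central_extension_of_quaternion_by_cyclic8_classification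
    (E : Type*) [Group E] (hE : Nat.card E = 64)
    (C : Subgroup E) (hCcyc : IsCyclic C) (hCcard : Nat.card C = 8)
    (hCcenter : C ≤ Subgroup.center E)
    (π : E →* QuaternionGroup 2) (hπ : Function.Surjective π) (hker : π.ker = C) :
    Nonempty (E ≃* (Multiplicative (ZMod 8) × QuaternionGroup 2)) ∨
      Nonempty (E ≃* PresentedGroup g44Rels) := by
  obtain ⟨⟨z, hzC⟩, hzg⟩ := hCcyc.exists_generator
  have hzC' : ∀ c ∈ C, ∃ k : ℤ, c = z ^ k := by
    intro c hc
    obtain ⟨k, hk⟩ := Subgroup.mem_zpowers_iff.mp (hzg ⟨c, hc⟩)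
    exact ⟨k, by simpa using (congrArg Subtype.val hk).symm⟩
  have hz : ∀ g, g * z = z * g := Subgroup.mem_center_iff.mp (hCcenter hzC)
  have hz8 : z ^ 8 = 1 := by
    have := pow_card_eq_one' (x := (⟨z, hzC⟩ : C))
    rw [hCcard] at this
    simpa using congrArg Subtype.val this
  obtain ⟨x, hx⟩ := hπ (QuaternionGroup.a 1)
  obtain ⟨y, hy⟩ := hπ (QuaternionGroup.xa 0)
  obtain ⟨m, hm⟩ := hzC' ((y ^ 2)⁻¹ * x ^ 2) (by
    rw [← hker, MonoidHom.mem_ker]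
    simp only [map_mul, map_inv, map_pow, hx, hy]; decide)
  obtain ⟨n, hn⟩ := hzC' ((x⁻¹ * y)⁻¹ * (y * x)) (by
    rw [← hker, MonoidHom.mem_ker]
    simp only [map_mul, map_inv, hx, hy]; decide)
  refine aux_D hE x y z hz hz8 m n (by rw [← hm]; group) (by rw [← hn]; group) ?_
  intro K hzK hxK hyK
  have hCK : C ≤ K := by
    intro c hc
    obtain ⟨k, rfl⟩ := hzC' c hc
    exact zpow_mem hzK k
  rw [eq_top_iff]
  intro e _
  have : ∃ k ∈ K, π k = π e := by
    rcases π e with i | i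
    · refine ⟨x ^ i.val, pow_mem hxK _, ?_⟩
      rw [map_pow, hx, QuaternionGroup.a_one_pow]; simp
    · refine ⟨y * x ^ i.val, mul_mem hyK (pow_mem hxK _), ?_⟩
      rw [map_mul, map_pow, hx, hy, QuaternionGroup.a_one_pow]; simp
  obtain ⟨k, hk, hke⟩ := this
  have : k⁻¹ * e ∈ C := by
    rw [← hker, MonoidHom.mem_ker, map_mul, map_inv, hke]; simp
  exact (Subgroup.mul_mem_cancel_left K (inv_mem hk)).mp (hCK this)
end

section
/- Let E be the group presented by two generators a, b subject to the relations a¹⁶ = 1, b⁴ = 1, a⁻¹b⁻¹ab = b², and let α, β denote the images of a, b in E. Then: (i) E has cardinality 64; (ii) β² lies in the center of E and in the commutator subgroup of E; (iii) the subgroup generated by α²β² is cyclic of cardinality 8, the subgroup generated by β² has cardinality 2, and these two subgroups intersect trivially; consequently the subgroup ⟨α², β²⟩ generated by α² and β² is the internal direct product ⟨α²β²⟩ × ⟨β²⟩, so the extension 1 → ⟨α²β²⟩ → ⟨α², β²⟩ → ℤ/2ℤ → 1 is split. -/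
/-- Concrete model: `(i, j)` stands for `a ^ i * b ^ j`. -/
@[ext] structure M44 where
  x : ZMod 16
  y : ZMod 4

namespace M44

def c : ZMod 16 →+* ZMod 4 := ZMod.castHom (by norm_num : 4 ∣ 16) (ZMod 4)

def s (k : ZMod 16) : ZMod 4 := 1 + 2 * c k

lemma s_add (k l : ZMod 16) : s (k + l) = s k * s l := by
  have h : (4 : ZMod 4) = 0 := by decide
  simp only [s, map_add]
  linear_combination (-(c k * c l)) * h

lemma s_zero : s 0 = 1 := by simp [s]

lemma s_neg (k : ZMod 16) : s (-k) * s k = 1 := by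
  rw [← s_add]; simp [s_zero]

instance : Mul M44 := ⟨fun p q => ⟨p.x + q.x, s q.x * p.y + q.y⟩⟩
instance : One M44 := ⟨⟨0, 0⟩⟩
instance : Inv M44 := ⟨fun p => ⟨-p.x, -(s (-p.x) * p.y)⟩⟩

@[simp] lemma mul_x (p q : M44) : (p * q).x = p.x + q.x := rfl
@[simp] lemma mul_y (p q : M44) : (p * q).y = s q.x * p.y + q.y := rfl
@[simp] lemma one_x : (1 : M44).x = 0 := rfl
@[simp] lemma one_y : (1 : M44).y = 0 := rfl
@[simp] lemma inv_x (p : M44) : (p⁻¹).x = -p.x := rfl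
@[simp] lemma inv_y (p : M44) : (p⁻¹).y = -(s (-p.x) * p.y) := rfl

instance : Group M44 := Group.ofLeftAxioms
  (by
    intro p q r
    ext
    · simp [add_assoc]
    · simp only [mul_x, mul_y, s_add]; ring)
  (by intro p; ext <;> simp)
  (by
    intro p
    ext
    · simp
    · simp only [mul_y, inv_y, one_y]
      linear_combination (-p.y) * s_neg p.x)

def px : M44 →* Multiplicative (ZMod 16) where
  toFun p := Multiplicative.ofAdd p.x
  map_one' := rfl
  map_mul' _ _ := rfl

lemma zpow_x (p : M44) (k : ℤ) : (p ^ k).x = k * p.x := by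
  have h := map_zpow px p k
  have h2 := congrArg Multiplicative.toAdd h
  simpa [px] using h2

def a : M44 := ⟨1, 0⟩
def b : M44 := ⟨0, 1⟩

lemma bpow (k : ℕ) : b ^ k = ⟨0, k⟩ := by
  induction k with
  | zero => ext <;> simp
  | succ n ih => rw [pow_succ, ih]; ext <;> simp [b, s_zero]

lemma apow (k : ℕ) : a ^ k = ⟨k, 0⟩ := by
  induction k with
  | zero => ext <;> simp
  | succ n ih => rw [pow_succ, ih]; ext <;> simp [a]

lemma bzpow (k : ℤ) : b ^ k = ⟨0, k⟩ := by
  obtain ⟨n, rfl | rfl⟩ := k.eq_nat_or_neg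
  · simp [bpow]
  · rw [zpow_neg, zpow_natCast, bpow]; ext <;> simp [s_zero]

lemma azpow (k : ℤ) : a ^ k = ⟨k, 0⟩ := by
  obtain ⟨n, rfl | rfl⟩ := k.eq_nat_or_neg
  · simp [apow]
  · rw [zpow_neg, zpow_natCast, apow]; ext <;> simp

lemma abzpow (m n : ℤ) : a ^ m * b ^ n = ⟨m, n⟩ := by
  rw [azpow, bzpow]; ext <;> simp

def equivProd : M44 ≃ ZMod 16 × ZMod 4 where
  toFun p := (p.x, p.y)
  invFun p := ⟨p.1, p.2⟩
  left_inv _ := rfl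
  right_inv _ := rfl

lemma card : Nat.card M44 = 64 := by
  rw [Nat.card_congr equivProd]; simp

lemma rels_hold : ∀ r ∈ g44Rels, FreeGroup.lift ![a, b] r = 1 := by
  intro r hr
  rcases hr with rfl | rfl | rfl
  · simp [apow]; rfl
  · simp [bpow]; rfl
  · simp only [map_mul, map_inv, map_pow, FreeGroup.lift_apply_of]
    have h1 : ∀ p : M44, p.x = 0 → p.y = 0 → p = 1 := fun p h h' => M44.ext h h'
    apply h1 <;> decide

def φ : PresentedGroup g44Rels →* M44 := PresentedGroup.toGroup rels_hold

end M44

abbrev gα : PresentedGroup g44Rels := PresentedGroup.of 0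
abbrev gβ : PresentedGroup g44Rels := PresentedGroup.of 1

lemma φα : M44.φ gα = M44.a := PresentedGroup.toGroup.of M44.rels_hold
lemma φβ : M44.φ gβ = M44.b := PresentedGroup.toGroup.of M44.rels_hold

lemma α16 : gα ^ 16 = 1 :=
  PresentedGroup.one_of_mem (rels := g44Rels) (x := FreeGroup.of 0 ^ 16) (by simp [g44Rels])
lemma β4 : gβ ^ 4 = 1 :=
  PresentedGroup.one_of_mem (rels := g44Rels) (x := FreeGroup.of 1 ^ 4) (by simp [g44Rels])
lemma rel3 : gα⁻¹ * gβ⁻¹ * gα * gβ * (gβ ^ 2)⁻¹ = 1 :=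
  PresentedGroup.one_of_mem (rels := g44Rels) (x := (FreeGroup.of 0)⁻¹ * (FreeGroup.of 1)⁻¹ * FreeGroup.of 0 * FreeGroup.of 1 *
      (FreeGroup.of 1 ^ 2)⁻¹) (by simp [g44Rels])

lemma conj1 : gα⁻¹ * gβ * gα = gβ⁻¹ := by
  have h := rel3
  rw [mul_inv_eq_one, pow_two, mul_left_inj] at h
  have h2 := congrArg (·⁻¹) h
  simpa [mul_assoc] using h2

lemma conj2 (n : ℤ) : gα⁻¹ * gβ ^ n * gα = gβ ^ (-n) := by
  have := conj_zpow (i := n) (a := gα⁻¹) (b := gβ)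
  rw [inv_inv] at this
  rw [← this, conj1, inv_zpow, zpow_neg]

lemma move1 (n : ℤ) : gβ ^ n * gα = gα * gβ ^ (-n) := by
  rw [← conj2]; group

lemma move2 (n : ℤ) : gβ ^ n * gα⁻¹ = gα⁻¹ * gβ ^ (-n) := by
  have := conj2 (-n)
  rw [neg_neg] at this
  rw [← this]; group

lemma normal_form (g : PresentedGroup g44Rels) : ∃ m n : ℤ, g = gα ^ m * gβ ^ n := by
  have hg : g ∈ Subgroup.closure (Set.range (PresentedGroup.of (rels := g44Rels))) := by
    rw [PresentedGroup.closure_range_of]; trivial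
  induction hg using Subgroup.closure_induction_right with
  | one => exact ⟨0, 0, by simp⟩
  | mul_right x hx y hy ih =>
    obtain ⟨m, n, rfl⟩ := ih
    obtain ⟨i, rfl⟩ := hy
    fin_cases i
    · refine ⟨m + 1, -n, ?_⟩
      change _ * gα = _
      rw [mul_assoc, move1, zpow_add_one, mul_assoc]
    · exact ⟨m, n + 1, by rw [zpow_add_one, mul_assoc]; rfl⟩
  | mul_inv_cancel x hx y hy ih =>
    obtain ⟨m, n, rfl⟩ := ih
    obtain ⟨i, rfl⟩ := hy
    fin_cases i
    · refine ⟨m - 1, -n, ?_⟩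
      change _ * gα⁻¹ = _
      rw [mul_assoc, move2, zpow_sub_one, mul_assoc]
    · exact ⟨m, n - 1, by rw [zpow_sub_one, mul_assoc]; rfl⟩

lemma φ_inj : Function.Injective M44.φ := by
  rw [injective_iff_map_eq_one]
  intro g hg
  obtain ⟨m, n, rfl⟩ := normal_form g
  rw [map_mul, map_zpow, map_zpow, φα, φβ, M44.abzpow] at hg
  have h1 : ((m : ℤ) : ZMod 16) = 0 := congrArg M44.x hg
  have h2 : ((n : ℤ) : ZMod 4) = 0 := congrArg M44.y hg
  rw [ZMod.intCast_zmod_eq_zero_iff_dvd m 16] at h1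
  rw [ZMod.intCast_zmod_eq_zero_iff_dvd n 4] at h2
  obtain ⟨k, rfl⟩ := h1
  obtain ⟨l, rfl⟩ := h2
  rw [zpow_mul, zpow_mul]
  have e1 : gα ^ ((16 : ℕ) : ℤ) = 1 := by rw [zpow_natCast]; exact α16
  have e2 : gβ ^ ((4 : ℕ) : ℤ) = 1 := by rw [zpow_natCast]; exact β4
  rw [e1, e2]; simp

lemma φ_surj : Function.Surjective M44.φ := by
  rintro ⟨i, j⟩
  refine ⟨gα ^ (i.val : ℤ) * gβ ^ (j.val : ℤ), ?_⟩
  rw [map_mul, map_zpow, map_zpow, φα, φβ, M44.abzpow]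
  ext <;> simp

lemma φg : M44.φ (gα ^ 2 * gβ ^ 2) = ⟨2, 2⟩ := by
  rw [map_mul, map_pow, map_pow, φα, φβ]
  exact M44.abzpow 2 2

lemma φh : M44.φ (gβ ^ 2) = ⟨0, 2⟩ := by
  rw [map_pow, φβ, M44.bpow]; rfl

lemma order_g : orderOf (gα ^ 2 * gβ ^ 2) = 8 := by
  rw [← orderOf_injective M44.φ φ_inj, φg]
  have := orderOf_eq_prime_pow (p := 2) (n := 2) (x := (⟨2, 2⟩ : M44))
    (by intro h; have := congrArg M44.x h; revert this; decide)
    (by apply M44.ext <;> decide)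
  simpa using this

lemma order_h : orderOf (gβ ^ 2) = 2 := by
  rw [← orderOf_injective M44.φ φ_inj, φh]
  exact orderOf_eq_prime (by apply M44.ext <;> decide)
    (by intro h; have := congrArg M44.y h; revert this; decide)


/-- In the presented group `E = ⟨a, b ∣ a¹⁶ = b⁴ = 1, a⁻¹b⁻¹ab = b²⟩` with images
`α, β` of the generators: (i) `E` has order 64; (ii) `β²` is central and lies in the
commutator subgroup; (iii) `⟨α²β²⟩` is cyclic of order 8, `⟨β²⟩` has order 2, they
intersect trivially, and together they generate `⟨α², β²⟩`, so the extension
`1 → ⟨α²β²⟩ → ⟨α², β²⟩ → ℤ/2 → 1` is split. -/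
theorem g44_structure :
    Nat.card (PresentedGroup g44Rels) = 64 ∧
    (PresentedGroup.of (rels := g44Rels) 1) ^ 2 ∈ Subgroup.center (PresentedGroup g44Rels) ∧
    (PresentedGroup.of (rels := g44Rels) 1) ^ 2 ∈ commutator (PresentedGroup g44Rels) ∧
    IsCyclic (Subgroup.zpowers
      ((PresentedGroup.of (rels := g44Rels) 0) ^ 2 * (PresentedGroup.of (rels := g44Rels) 1) ^ 2)) ∧
    Nat.card (Subgroup.zpowers
      ((PresentedGroup.of (rels := g44Rels) 0) ^ 2 * (PresentedGroup.of (rels := g44Rels) 1) ^ 2)) = 8 ∧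
    Nat.card (Subgroup.zpowers ((PresentedGroup.of (rels := g44Rels) 1) ^ 2)) = 2 ∧
    Subgroup.zpowers
        ((PresentedGroup.of (rels := g44Rels) 0) ^ 2 * (PresentedGroup.of (rels := g44Rels) 1) ^ 2) ⊓
      Subgroup.zpowers ((PresentedGroup.of (rels := g44Rels) 1) ^ 2) = ⊥ ∧
    Subgroup.zpowers
        ((PresentedGroup.of (rels := g44Rels) 0) ^ 2 * (PresentedGroup.of (rels := g44Rels) 1) ^ 2) ⊔
      Subgroup.zpowers ((PresentedGroup.of (rels := g44Rels) 1) ^ 2) =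
      Subgroup.closure {(PresentedGroup.of (rels := g44Rels) 0) ^ 2,
        (PresentedGroup.of (rels := g44Rels) 1) ^ 2} := by
  refine ⟨?_, ?_, ?_, inferInstance, ?_, ?_, ?_, ?_⟩
  · rw [Nat.card_congr (Equiv.ofBijective M44.φ ⟨φ_inj, φ_surj⟩), M44.card]
  · rw [Subgroup.mem_center_iff]
    intro g
    apply φ_inj
    rw [map_mul, map_mul]
    change M44.φ g * M44.φ (gβ ^ 2) = M44.φ (gβ ^ 2) * M44.φ g
    rw [φh]
    have h : (4 : ZMod 4) = 0 := by decide
    ext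
    · simp
    · simp only [M44.mul_y, M44.s, map_zero]
      linear_combination (-(M44.c (M44.φ g).x)) * h
  · have h := rel3
    rw [mul_inv_eq_one] at h
    change gβ ^ 2 ∈ _
    rw [← h, commutator_def]
    have := Subgroup.commutator_mem_commutator (Subgroup.mem_top gα⁻¹) (Subgroup.mem_top gβ⁻¹)
    simpa [commutatorElement_def] using this
  · rw [Nat.card_zpowers]; exact order_g
  · rw [Nat.card_zpowers]; exact order_h
  · rw [eq_bot_iff]
    rintro z ⟨⟨k, hk⟩, ⟨l, hl⟩⟩
    change (gα ^ 2 * gβ ^ 2) ^ k = z at hk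
    change (gβ ^ 2) ^ l = z at hl
    have e := congrArg (fun t => (M44.φ t).x) (hk.trans hl.symm)
    simp only [map_zpow] at e
    rw [φg, φh, M44.zpow_x, M44.zpow_x] at e
    have e2 : ((k * 2 : ℤ) : ZMod 16) = 0 := by push_cast; simpa using e
    rw [ZMod.intCast_zmod_eq_zero_iff_dvd (k * 2) 16] at e2
    have e3 : (8 : ℤ) ∣ k := by omega
    rw [Subgroup.mem_bot, ← hk, ← orderOf_dvd_iff_zpow_eq_one, order_g]
    exact e3
  · change Subgroup.zpowers (gα ^ 2 * gβ ^ 2) ⊔ Subgroup.zpowers (gβ ^ 2) =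
      Subgroup.closure {gα ^ 2, gβ ^ 2}
    apply le_antisymm
    · have h1 : gα ^ 2 ∈ Subgroup.closure {gα ^ 2, gβ ^ 2} := Subgroup.subset_closure (by simp)
      have h2 : gβ ^ 2 ∈ Subgroup.closure {gα ^ 2, gβ ^ 2} := Subgroup.subset_closure (by simp)
      rw [sup_le_iff, Subgroup.zpowers_le, Subgroup.zpowers_le]
      exact ⟨mul_mem h1 h2, h2⟩
    · have h2 : gβ ^ 2 ∈ Subgroup.zpowers (gα ^ 2 * gβ ^ 2) ⊔ Subgroup.zpowers (gβ ^ 2) :=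
        Subgroup.mem_sup_right (Subgroup.mem_zpowers _)
      have h1 : gα ^ 2 * gβ ^ 2 ∈ Subgroup.zpowers (gα ^ 2 * gβ ^ 2) ⊔ Subgroup.zpowers (gβ ^ 2) :=
        Subgroup.mem_sup_left (Subgroup.mem_zpowers _)
      rw [Subgroup.closure_le]
      rintro z (rfl | rfl)
      · exact (Subgroup.mul_mem_cancel_right _ h2).1 h1
      · exact h2
end

section
/- Let K be a number field of degree 2 over ℚ containing an element α with α² = −21 (i.e. K = ℚ(√−21)). Then the ideal class group of the ring of integers of K is isomorphic to (ℤ/2ℤ) × (ℤ/2ℤ); in particular it has cardinality 4 and exponent 2, so its quotient modulo squares is nontrivial. -/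
theorem q21_mat {R S : Type*} [CommRing R] [CommRing S] [Algebra R S]
    (b : Module.Basis (Fin 2) R S) (h0 : b 0 = 1) (h1 : b 1 ^ 2 = -21) (p q : R) :
    Algebra.leftMulMatrix b (algebraMap R S p + q • b 1) = !![p, -21*q; q, p] := by
  have e0 : (algebraMap R S p + q • b 1) * b 0 = p • b 0 + q • b 1 := by
    rw [h0, Algebra.smul_def p, mul_one, mul_one]
  have e1 : (algebraMap R S p + q • b 1) * b 1 = (-21*q) • b 0 + p • b 1 := by
    rw [h0]
    simp only [Algebra.smul_def, map_mul, map_neg, map_ofNat]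
    linear_combination algebraMap R S q * h1
  ext i j
  rw [Algebra.leftMulMatrix_eq_repr_mul]
  fin_cases j
  · simp only [Fin.zero_eta]
    rw [e0]
    fin_cases i <;> simp
  · simp only [Fin.mk_one]
    rw [e1]
    fin_cases i <;> simp

theorem q21_trace {R S : Type*} [CommRing R] [CommRing S] [Algebra R S]
    (b : Module.Basis (Fin 2) R S) (h0 : b 0 = 1) (h1 : b 1 ^ 2 = -21) (p q : R) :
    Algebra.trace R S (algebraMap R S p + q • b 1) = 2 * p := by
  rw [Algebra.trace_eq_matrix_trace b, q21_mat b h0 h1]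
  simp [Matrix.trace, Fin.sum_univ_two]; ring

theorem q21_norm {R S : Type*} [CommRing R] [CommRing S] [Algebra R S]
    (b : Module.Basis (Fin 2) R S) (h0 : b 0 = 1) (h1 : b 1 ^ 2 = -21) (p q : R) :
    Algebra.norm R (algebraMap R S p + q • b 1) = p ^ 2 + 21 * q ^ 2 := by
  rw [Algebra.norm_eq_matrix_det b, q21_mat b h0 h1, Matrix.det_fin_two_of]
  ring

theorem q21_linind {F K : Type*} [Field F] [LinearOrder F] [IsStrictOrderedRing F] [CommRing K]
   [Nontrivial K] [Algebra F K] (α : K)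
    (hα : α ^ 2 = -21) : LinearIndependent F ![(1:K), α] := by
  rw [LinearIndependent.pair_iff]
  intro s t h
  have hst : s ^ 2 + 21 * t ^ 2 = 0 := by
    apply FaithfulSMul.algebraMap_injective F K
    simp only [Algebra.smul_def] at h
    simp only [map_add, map_mul, map_pow, map_ofNat, map_zero]
    linear_combination (algebraMap F K s - algebraMap F K t * α) * h + (algebraMap F K t)^2 * hα
  constructor <;> nlinarith [sq_nonneg s, sq_nonneg t]

theorem q21_int (p q : ℚ) (m k : ℤ) (h1 : 2 * p = m) (h2 : p ^ 2 + 21 * q ^ 2 = k) :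
    ∃ x y : ℤ, p = x ∧ q = y := by
  have h3 : 21 * (2 * q) ^ 2 = ((4 * k - m ^ 2 : ℤ) : ℚ) := by
    push_cast; rw [← h1, ← h2]; ring
  have h4 : ∃ n : ℤ, 2 * q = n := by
    have h5 : IsIntegral ℤ (21 * (2 * q)) := by
      apply IsIntegral.of_pow (n := 2) (by norm_num)
      have : (21 * (2 * q))^2 = ((21 * (4 * k - m ^ 2) : ℤ) : ℚ) := by
        rw [Int.cast_mul, ← h3]; push_cast; ring
      rw [this]; exact isIntegral_algebraMap (R := ℤ) (A := ℚ)
    obtain ⟨w, hw⟩ := IsIntegrallyClosed.isIntegral_iff.mp h5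
    simp only [algebraMap_int_eq, eq_intCast] at hw
    have hw2 : w ^ 2 = 21 * (4 * k - m ^ 2) := by
      have : ((w ^ 2 : ℤ) : ℚ) = ((21 * (4 * k - m ^ 2) : ℤ) : ℚ) := by
        rw [Int.cast_mul, ← h3]; push_cast; rw [hw]; ring
      exact_mod_cast this
    have d3 : (3:ℤ) ∣ w := Int.prime_three.dvd_of_dvd_pow (n := 2) (by rw [hw2]; exact ⟨7 * (4 * k - m^2), by ring⟩)
    have d7 : (7:ℤ) ∣ w := Prime.dvd_of_dvd_pow (n := 2) (Nat.prime_iff_prime_int.mp (by norm_num : Nat.Prime 7)) (by rw [hw2]; exact ⟨3 * (4 * k - m^2), by push_cast; ring⟩)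
    obtain ⟨n, hn⟩ : (21:ℤ) ∣ w := by omega
    refine ⟨n, ?_⟩
    have : (w:ℚ) = 21 * n := by rw [hn]; push_cast; ring
    linarith
  obtain ⟨n, hn⟩ := h4
  have h6 : 21 * n ^ 2 = 4 * k - m ^ 2 := by
    rw [hn] at h3; exact_mod_cast h3
  rcases Int.even_or_odd' m with ⟨x, hx | hx⟩ <;> rcases Int.even_or_odd' n with ⟨y, hy | hy⟩
  · refine ⟨x, y, ?_, ?_⟩
    · rw [hx] at h1; push_cast at h1; linarith
    · rw [hy] at hn; push_cast at hn; linarith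
  all_goals
    exfalso
    subst hx hy
    ring_nf at h6
    omega

open NumberField

theorem q21_basis (K : Type*) [Field K] [NumberField K]
    (hdeg : Module.finrank ℚ K = 2) (α : K) (hα : α ^ 2 = -21) :
    ∃ b : Module.Basis (Fin 2) ℤ (𝓞 K), b 0 = 1 ∧ b 1 ^ 2 = -21 := by
  have li := q21_linind (F := ℚ) α hα
  let B : Module.Basis (Fin 2) ℚ K := basisOfLinearIndependentOfCardEqFinrank li (by simp [hdeg])
  have B0 : B 0 = 1 := by simp [B]
  have B1 : B 1 = α := by simp [B]
  have ai : IsIntegral ℤ α := by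
    apply IsIntegral.of_pow (n := 2) (by norm_num)
    rw [hα]
    exact_mod_cast isIntegral_algebraMap (R := ℤ) (A := K) (x := -21)
  obtain ⟨a, haα⟩ : ∃ a : 𝓞 K, algebraMap (𝓞 K) K a = α := ⟨⟨α, ai⟩, rfl⟩
  have ha : a ^ 2 = -21 := by
    apply FaithfulSMul.algebraMap_injective (𝓞 K) K
    rw [map_pow, haα, hα, map_neg, map_ofNat]
  have key : ∀ x : 𝓞 K, ∃ m n : ℤ, x = m + n * a := by
    intro x
    have hx : algebraMap (𝓞 K) K x = algebraMap ℚ K (B.repr x 0) + (B.repr x 1) • B 1 := by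
      conv_lhs => rw [← B.sum_repr (algebraMap (𝓞 K) K x)]
      rw [Fin.sum_univ_two, B0, Algebra.smul_def, mul_one]
    have ht := Algebra.isIntegral_trace (R := ℤ) (L := ℚ) (F := K) x.isIntegral_coe
    have hn := Algebra.isIntegral_norm (R := ℤ) ℚ (L := K) x.isIntegral_coe
    rw [hx, q21_trace B B0 (by rw [B1, hα])] at ht
    rw [hx, q21_norm B B0 (by rw [B1, hα])] at hn
    obtain ⟨m, hm⟩ := IsIntegrallyClosed.isIntegral_iff.mp ht
    obtain ⟨k, hk⟩ := IsIntegrallyClosed.isIntegral_iff.mp hn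
    obtain ⟨u, v, hu, hv⟩ := q21_int _ _ m k hm.symm hk.symm
    refine ⟨u, v, FaithfulSMul.algebraMap_injective (𝓞 K) K ?_⟩
    rw [hx, hu, hv, B1, Algebra.smul_def]
    simp [haα]
  have li' : LinearIndependent ℤ ![(1:𝓞 K), a] := by
    rw [LinearIndependent.pair_iff] at li ⊢
    intro s t h
    have := li s t (by
      have := congrArg (algebraMap (𝓞 K) K) h
      simpa [Algebra.smul_def, haα] using this)
    exact_mod_cast this
  suffices hs : ⊤ ≤ Submodule.span ℤ (Set.range ![(1:𝓞 K), a]) from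
    ⟨Module.Basis.mk li' hs, by simp, by simpa using ha⟩
  intro x _
  obtain ⟨m, n, h⟩ := key x
  simp only [Matrix.range_cons, Matrix.range_empty, Set.union_empty, Set.singleton_union]
  rw [Submodule.mem_span_pair]
  exact ⟨m, n, by rw [h]; simp⟩

theorem q21_discr (K : Type*) [Field K] [NumberField K]
    (b : Module.Basis (Fin 2) ℤ (𝓞 K)) (h0 : b 0 = 1) (h1 : b 1 ^ 2 = -21) : discr K = -84 := by
  rw [← NumberField.discr_eq_discr K b, Algebra.discr_def, Matrix.det_fin_two]
  simp only [Algebra.traceMatrix_apply, Algebra.traceForm_apply, h0, mul_one, one_mul]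
  have t1 := q21_trace b h0 h1 1 0
  have t2 := q21_trace b h0 h1 0 1
  have t3 := q21_trace b h0 h1 (-21) 0
  rw [← pow_two, h1]
  simp at t1 t2 t3
  simp [t1, t2, t3]

theorem q21_bound (K : Type*) [Field K] [NumberField K]
    (hdeg : Module.finrank ℚ K = 2) (hd : discr K = -84) (C : ClassGroup (𝓞 K)) :
    ∃ I : nonZeroDivisors (Ideal (𝓞 K)), ClassGroup.mk0 I = C ∧
      Ideal.absNorm (I : Ideal (𝓞 K)) ≤ 5 := by
  obtain ⟨I, hI, hb⟩ := NumberField.exists_ideal_in_class_of_norm_le C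
  refine ⟨I, hI, ?_⟩
  rw [hd, hdeg] at hb
  have hr : InfinitePlace.nrComplexPlaces K ≤ 1 := by
    have := InfinitePlace.card_add_two_mul_card_eq_rank K
    omega
  have pi3 := Real.pi_gt_d2
  have h4 : (4 / Real.pi) ^ InfinitePlace.nrComplexPlaces K ≤ 4 / 3.14 := by
    have h1 : 1 ≤ 4 / Real.pi := by
      rw [le_div_iff₀ Real.pi_pos]; linarith [Real.pi_le_four]
    calc _ ≤ (4 / Real.pi) ^ 1 := pow_le_pow_right₀ h1 hr
      _ ≤ _ := by rw [pow_one]; gcongr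
  have hs : √(84:ℝ) < 9.17 := by
    rw [Real.sqrt_lt' (by norm_num)]; norm_num
  have : (Ideal.absNorm (I : Ideal (𝓞 K)) : ℝ) < 6 := by
    refine hb.trans_lt ?_
    norm_num [Nat.factorial] at h4 hs ⊢
    nlinarith [Real.sqrt_nonneg 84]
  have : Ideal.absNorm (I : Ideal (𝓞 K)) < 6 := by exact_mod_cast this
  omega

theorem q21_coprime_mem {K : Type*} [Field K] [NumberField K] (I : Ideal (𝓞 K)) (N k : ℕ)
    (hN : (N : 𝓞 K) ∈ I) (hk : (k : 𝓞 K) ∈ I) (hc : Nat.Coprime k N) : I = ⊤ := by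
  obtain ⟨u, v, h⟩ := Nat.isCoprime_iff_coprime.mpr hc
  rw [Ideal.eq_top_iff_one]
  have h' : (u : 𝓞 K) * k + v * N = 1 := by exact_mod_cast h
  rw [← h']
  exact I.add_mem (I.mul_mem_left _ hk) (I.mul_mem_left _ hN)

theorem q21_classify {K : Type*} [Field K] [NumberField K]
    (a : 𝓞 K) (ha : a ^ 2 = -21) (hO : ∀ x : 𝓞 K, ∃ m n : ℤ, x = m + n * a)
    (I : Ideal (𝓞 K)) (N : ℕ) (hN : Ideal.absNorm I = N) (h0 : 0 < N)
    (hch : ∀ k : ℕ, 0 < k → k < N → (k : 𝓞 K) ∉ I) :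
    ∃ c : ℕ, c < N ∧ N ∣ c ^ 2 + 21 ∧ I = Ideal.span {(N : 𝓞 K), a - c} := by
  have hNI : (N : 𝓞 K) ∈ I := hN ▸ Ideal.absNorm_mem I
  have hdv : ∀ k : ℕ, (k : 𝓞 K) ∈ I → N ∣ k := by
    intro k hk
    by_contra hn
    have hr : 0 < k % N := Nat.pos_of_ne_zero fun h => hn (Nat.dvd_of_mod_eq_zero h)
    apply hch (k % N) hr (Nat.mod_lt _ h0)
    have : (k : 𝓞 K) = N * (k / N : ℕ) + (k % N : ℕ) := by
      exact_mod_cast (Nat.div_add_mod k N).symm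
    rw [this] at hk
    exact (I.add_mem_iff_right (I.mul_mem_right _ hNI)).mp hk
  have : CharP (𝓞 K ⧸ I) N := by
    constructor
    intro k
    rw [← map_natCast (Ideal.Quotient.mk I), Ideal.Quotient.eq_zero_iff_mem]
    refine ⟨hdv k, ?_⟩
    rintro ⟨j, rfl⟩
    rw [Nat.cast_mul]
    exact I.mul_mem_right _ hNI
  have hcard : Nat.card (𝓞 K ⧸ I) = N := by
    rw [← hN, Ideal.absNorm_apply, Submodule.cardQuot_apply]
  have : Finite (𝓞 K ⧸ I) := Nat.finite_of_card_ne_zero (by omega)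
  have := Fintype.ofFinite (𝓞 K ⧸ I)
  have : NeZero N := ⟨by omega⟩
  obtain ⟨z, hz⟩ := (ZMod.castHom_bijective (𝓞 K ⧸ I) (n := N)
    (by rw [← Nat.card_eq_fintype_card, hcard])).2 (Ideal.Quotient.mk I a)
  have hac : a - (z.val : ℕ) ∈ I := by
    rw [← Ideal.Quotient.eq, ← hz, map_natCast, ZMod.castHom_apply, ZMod.natCast_val]
  refine ⟨z.val, ZMod.val_lt z, ?_, ?_⟩
  · apply hdv
    have : ((z.val ^ 2 + 21 : ℕ) : 𝓞 K) = -(a + z.val) * (a - z.val) := by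
      push_cast
      linear_combination ha
    rw [this]
    exact I.mul_mem_left _ hac
  · apply le_antisymm
    · intro x hx
      obtain ⟨m, n, rfl⟩ := hO x
      have h1 : ((m + n * z.val : ℤ) : 𝓞 K) ∈ I := by
        have : ((m + n * z.val : ℤ) : 𝓞 K) = (m + n * a) - n * (a - (z.val : ℕ)) := by
          push_cast; ring
        rw [this]
        exact I.sub_mem hx (I.mul_mem_left _ hac)
      have h2 : (N : ℤ) ∣ m + n * z.val := by
        rw [Int.natCast_dvd]
        apply hdv
        rcases Int.natAbs_eq (m + n * z.val) with h | h
        · rw [h, Int.cast_natCast] at h1; exact h1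
        · rw [h, Int.cast_neg, neg_mem_iff, Int.cast_natCast] at h1
          exact h1
      obtain ⟨j, hj⟩ := h2
      rw [Ideal.mem_span_pair]
      refine ⟨j, n, ?_⟩
      have : (m : 𝓞 K) + n * (z.val : ℕ) = N * j := by exact_mod_cast hj
      linear_combination -this
    · rw [Ideal.span_le]
      rintro x (rfl | rfl)
      · exact hNI
      · exact hac

theorem q21_pair_mul {R : Type*} [CommRing R] (w x y z t : R) (d1 d2 d3 d4 c1 c2 c3 c4 : R)
    (h1 : w * y = t * d1) (h2 : w * z = t * d2) (h3 : x * y = t * d3) (h4 : x * z = t * d4)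
    (h : c1 * (w * y) + c2 * (w * z) + c3 * (x * y) + c4 * (x * z) = t) :
    (Ideal.span {w, x} : Ideal R) * Ideal.span {y, z} = Ideal.span {t} := by
  rw [Ideal.span_pair_mul_span_pair]
  apply le_antisymm
  · rw [Ideal.span_le]
    rintro u (rfl | rfl | rfl | rfl) <;> simp only [SetLike.mem_coe, Ideal.mem_span_singleton]
    exacts [⟨_, h1⟩, ⟨_, h2⟩, ⟨_, h3⟩, ⟨_, h4⟩]
  · rw [Ideal.span_singleton_le_iff_mem, ← h]
    refine add_mem (add_mem (add_mem ?_ ?_) ?_) ?_ <;>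
      exact Ideal.mul_mem_left _ _ (Ideal.subset_span (by simp))

theorem q21_not_principal {K : Type*} [Field K] [NumberField K]
    (b : Module.Basis (Fin 2) ℤ (𝓞 K)) (h0 : b 0 = 1) (h1 : b 1 ^ 2 = -21)
    (hO : ∀ x : 𝓞 K, ∃ m n : ℤ, x = m + n * b 1)
    (I : Ideal (𝓞 K)) (k : ℕ) (hI : I * I = Ideal.span {(k : 𝓞 K)})
    (hk : ∀ m n : ℤ, m ^ 2 + 21 * n ^ 2 ≠ k) : ¬ I.IsPrincipal := by
  rintro ⟨x, hx⟩
  rw [Ideal.submodule_span_eq] at hx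
  rw [hx] at hI
  have h := congrArg Ideal.absNorm hI
  rw [map_mul, Ideal.absNorm_span_singleton, Ideal.absNorm_span_singleton] at h
  have hN : ∀ m n : ℤ, Algebra.norm ℤ ((m : 𝓞 K) + n * b 1) = m ^ 2 + 21 * n ^ 2 := by
    intro m n
    rw [← q21_norm b h0 h1, Algebra.smul_def]
    simp
  have hkk := hN k 0
  simp only [Int.cast_natCast, Int.cast_zero, zero_mul, add_zero] at hkk
  obtain ⟨m, n, rfl⟩ := hO x
  rw [hN, hkk] at h
  zify at h
  rw [abs_of_nonneg (by positivity), abs_of_nonneg (by positivity)] at h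
  apply hk m n
  have : 0 ≤ m ^ 2 + 21 * n ^ 2 := by positivity
  nlinarith

theorem q21_rep (k : ℕ) (hk : k = 2 ∨ k = 3 ∨ k = 6) (m n : ℤ) : m ^ 2 + 21 * n ^ 2 ≠ k := by
  intro h
  have hn : n = 0 := by
    by_contra hn
    have : 0 < n ^ 2 := by positivity
    have : 0 ≤ m ^ 2 := by positivity
    rcases hk with rfl | rfl | rfl <;> push_cast at h <;> linarith
  subst hn
  have : m ≤ 2 := by rcases hk with rfl | rfl | rfl <;> push_cast at h <;> nlinarith
  have : -2 ≤ m := by rcases hk with rfl | rfl | rfl <;> push_cast at h <;> nlinarith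
  rcases hk with rfl | rfl | rfl <;> push_cast at h <;> interval_cases m <;> omega

theorem q21_group {G : Type*} [CommGroup G] (p q : G) (hp : p * p = 1) (hq : q * q = 1)
    (hp1 : p ≠ 1) (hq1 : q ≠ 1) (hpq : p * q ≠ 1)
    (hall : ∀ x : G, x = 1 ∨ x = p ∨ x = q ∨ x = p * q) : IsKleinFour G := by
  classical
  have hne : p ≠ q := by rintro rfl; exact hpq hp
  have hu : (Set.univ : Set G) = (({1, p, q, p * q} : Finset G) : Set G) := by
    ext x; simpa using hall x
  constructor
  · rw [← Set.ncard_univ, hu, Set.ncard_coe_finset]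
    rw [Finset.card_insert_of_notMem, Finset.card_insert_of_notMem,
      Finset.card_insert_of_notMem, Finset.card_singleton]
    · simp [hp1]
    · simp [hne, hq1]
    · simp [hp1.symm, hq1.symm, hpq.symm]
  · have h2 : Monoid.exponent G ∣ 2 := by
      apply Monoid.exponent_dvd_of_forall_pow_eq_one
      intro x
      rw [pow_two]
      rcases hall x with rfl | rfl | rfl | rfl
      · simp
      · exact hp
      · exact hq
      · rw [mul_mul_mul_comm, hp, hq, one_mul]
    rcases (Nat.dvd_prime Nat.prime_two).mp h2 with h | h
    · exfalso
      have := Monoid.pow_exponent_eq_one p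
      rw [h, pow_one] at this
      exact hp1 this
    · exact h

theorem q21_klein (K : Type*) [Field K] [NumberField K]
    (hdeg : Module.finrank ℚ K = 2) (α : K) (hα : α ^ 2 = -21) :
    IsKleinFour (ClassGroup (𝓞 K)) := by
  obtain ⟨b, h0, h1⟩ := q21_basis K hdeg α hα
  have hd := q21_discr K b h0 h1
  have hO : ∀ x : 𝓞 K, ∃ m n : ℤ, x = m + n * b 1 := by
    intro x
    refine ⟨b.repr x 0, b.repr x 1, ?_⟩
    conv_lhs => rw [← b.sum_repr x]
    simp [Fin.sum_univ_two, h0]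
  have hnp := q21_not_principal b h0 h1 hO
  have hcl := q21_classify (b 1) h1 hO
  generalize b 1 = a at *
  have s2 : (Ideal.span {2, a - 1} : Ideal (𝓞 K)) * Ideal.span {2, a - 1} = Ideal.span {2} :=
    q21_pair_mul _ _ _ _ _ 2 (a - 1) (a - 1) (-10 - a) 6 1 0 1 (by ring) (by ring) (by ring)
      (by linear_combination h1) (by linear_combination h1)
  have s3 : (Ideal.span {3, a} : Ideal (𝓞 K)) * Ideal.span {3, a} = Ideal.span {3} :=
    q21_pair_mul _ _ _ _ _ 3 a a (-7) (-2) 0 0 (-1) (by ring) (by ring) (by ring)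
      (by linear_combination h1) (by linear_combination -h1)
  have s6 : (Ideal.span {6, a - 3} : Ideal (𝓞 K)) * Ideal.span {6, a - 3} = Ideal.span {6} :=
    q21_pair_mul _ _ _ _ _ 6 (a - 3) (a - 3) (-2 - a) 1 1 0 1 (by ring) (by ring) (by ring)
      (by linear_combination h1) (by linear_combination h1)
  have s5 : (Ideal.span {5, a - 2} : Ideal (𝓞 K)) * Ideal.span {6, a - 3} = Ideal.span {a + 3} :=
    q21_pair_mul _ _ _ _ _ (3 - a) (2 + a) (3 + a) (-5) 0 (-1) 1 0 (by linear_combination h1)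
      (by linear_combination -h1) (by linear_combination -h1)
      (by linear_combination h1) (by ring)
  have s5' : (Ideal.span {5, a - 3} : Ideal (𝓞 K)) * Ideal.span {6, a - 3} = Ideal.span {a - 3} :=
    q21_pair_mul _ _ _ _ _ (-a - 3) 5 6 (a - 3) 0 (-1) 1 0 (by linear_combination h1)
      (by ring) (by ring) (by ring) (by ring)
  have s23 : (Ideal.span {2, a - 1} : Ideal (𝓞 K)) * Ideal.span {3, a} = Ideal.span {6, a - 3} := by
    rw [Ideal.span_pair_mul_span_pair]
    apply le_antisymm
    · rw [Ideal.span_le]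
      rintro u (rfl | rfl | rfl | rfl) <;> simp only [SetLike.mem_coe, Ideal.mem_span_pair]
      · exact ⟨1, 0, by ring⟩
      · exact ⟨1, 2, by ring⟩
      · exact ⟨1, 3, by ring⟩
      · exact ⟨-4, -1, by linear_combination -h1⟩
    · rw [Ideal.span_le]
      rintro u (rfl | rfl)
      · exact Ideal.subset_span (by norm_num)
      · have : a - 3 = (a - 1) * 3 - 2 * a := by ring
        rw [this]
        exact Ideal.sub_mem _ (Ideal.subset_span (by simp)) (Ideal.subset_span (by simp))
  have nz : ∀ (k : ℕ) (x : 𝓞 K), k ≠ 0 →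
      (Ideal.span {(k : 𝓞 K), x} : Ideal (𝓞 K)) ∈ nonZeroDivisors (Ideal (𝓞 K)) := by
    intro k x hk
    rw [mem_nonZeroDivisors_iff_ne_zero]
    intro h
    have : (k : 𝓞 K) ∈ (Ideal.span {(k : 𝓞 K), x} : Ideal (𝓞 K)) := Ideal.subset_span (by simp)
    rw [h, Ideal.zero_eq_bot, Ideal.mem_bot] at this
    exact hk (by exact_mod_cast this)
  have n2 := nz 2 (a - 1) (by norm_num)
  have n3 := nz 3 a (by norm_num)
  have n6 := nz 6 (a - 3) (by norm_num)
  push_cast at n2 n3 n6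
  have e23 : ClassGroup.mk0 ⟨_, n2⟩ * ClassGroup.mk0 ⟨_, n3⟩ = ClassGroup.mk0 ⟨_, n6⟩ := by
    rw [← map_mul]
    congr 1
    exact Subtype.ext s23
  have hsq : ∀ (I : Ideal (𝓞 K)) (hI : I ∈ nonZeroDivisors (Ideal (𝓞 K))) (x : 𝓞 K),
      I * I = Ideal.span {x} → ClassGroup.mk0 ⟨I, hI⟩ * ClassGroup.mk0 ⟨I, hI⟩ = 1 := by
    intro I hI x h
    rw [← map_mul]
    refine (ClassGroup.mk0_eq_one_iff (mul_mem hI hI)).mpr ?_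
    rw [h]
    exact ⟨x, rfl⟩
  have h66 := hsq _ n6 _ s6
  refine q21_group (ClassGroup.mk0 ⟨_, n2⟩) (ClassGroup.mk0 ⟨_, n3⟩) (hsq _ n2 _ s2)
    (hsq _ n3 _ s3) ?_ ?_ ?_ ?_
  · rw [Ne, ClassGroup.mk0_eq_one_iff]
    exact hnp _ 2 (by exact_mod_cast s2) (q21_rep 2 (by simp))
  · rw [Ne, ClassGroup.mk0_eq_one_iff]
    exact hnp _ 3 (by exact_mod_cast s3) (q21_rep 3 (by simp))
  · rw [e23, Ne, ClassGroup.mk0_eq_one_iff]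
    exact hnp _ 6 (by exact_mod_cast s6) (q21_rep 6 (by simp))
  · intro C
    rw [e23]
    obtain ⟨⟨I, hI0⟩, rfl, hI⟩ := q21_bound K hdeg hd C
    simp only at hI
    have hcop : I ≠ ⊤ → ∀ k : ℕ, Nat.Coprime k (Ideal.absNorm I) → (k : 𝓞 K) ∉ I :=
      fun ht k hc hk => ht (q21_coprime_mem I _ k (Ideal.absNorm_mem I) hk hc)
    have hpos : Ideal.absNorm I ≠ 0 := Ideal.absNorm_ne_zero_of_nonZeroDivisors ⟨I, hI0⟩
    by_cases htop : I = ⊤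
    · left
      rw [ClassGroup.mk0_eq_one_iff, htop]
      exact ⟨1, by simp⟩
    replace hcop := hcop htop
    have hne1 : Ideal.absNorm I ≠ 1 := by rwa [Ne, Ideal.absNorm_eq_one_iff]
    have h6 : ∀ x : 𝓞 K, I * Ideal.span {6, a - 3} = Ideal.span {x} →
        ClassGroup.mk0 ⟨I, hI0⟩ = ClassGroup.mk0 ⟨_, n6⟩ := by
      intro x hx
      rw [← mul_left_inj (ClassGroup.mk0 ⟨_, n6⟩), h66, ← map_mul]
      refine (ClassGroup.mk0_eq_one_iff (mul_mem hI0 n6)).mpr ?_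
      rw [hx]
      exact ⟨x, rfl⟩
    obtain h | h | h | h : Ideal.absNorm I = 2 ∨ Ideal.absNorm I = 3 ∨ Ideal.absNorm I = 4 ∨
      Ideal.absNorm I = 5 := by omega
    · right; left
      rw [h] at hcop
      obtain ⟨c, hc, hd, hs⟩ := hcl I 2 h (by norm_num) (fun k hk hk' => hcop k (by
        interval_cases k; norm_num))
      interval_cases c
      · omega
      · congr 1; apply Subtype.ext; simpa using hs
    · right; right; left
      rw [h] at hcop
      obtain ⟨c, hc, hd, hs⟩ := hcl I 3 h (by norm_num) (fun k hk hk' => hcop k (by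
        interval_cases k <;> norm_num))
      interval_cases c
      · congr 1; apply Subtype.ext; simpa using hs
      · omega
      · omega
    · left
      rw [h] at hcop
      by_cases h2 : (2 : 𝓞 K) ∈ I
      · rw [ClassGroup.mk0_eq_one_iff]
        obtain ⟨J, hJ⟩ := Ideal.dvd_iff_le.mpr ((Ideal.span_singleton_le_iff_mem I).mpr h2)
        have hn := congrArg Ideal.absNorm hJ
        have hc2 : Ideal.absNorm (Ideal.span {(2 : 𝓞 K)}) = 4 := by
          rw [Ideal.absNorm_span_singleton]
          have := Algebra.norm_algebraMap_of_basis b (2 : ℤ)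
          simp at this
          rw [this]; norm_num
        rw [map_mul, hc2, h] at hn
        have : Ideal.absNorm J = 1 := by omega
        rw [Ideal.absNorm_eq_one_iff] at this
        rw [this, Ideal.mul_top] at hJ
        rw [← hJ]
        exact ⟨2, rfl⟩
      · exfalso
        obtain ⟨c, hc, hd, hs⟩ := hcl I 4 h (by norm_num) (fun k hk hk' => by
          interval_cases k
          · exact hcop 1 (by norm_num)
          · exact_mod_cast h2
          · exact hcop 3 (by norm_num))
        interval_cases c <;> omega
    · right; right; right
      rw [h] at hcop
      obtain ⟨c, hc, hd, hs⟩ := hcl I 5 h (by norm_num) (fun k hk hk' => hcop k (by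
        interval_cases k <;> norm_num))
      interval_cases c
      · omega
      · omega
      · exact h6 (a + 3) (by rw [hs]; exact_mod_cast s5)
      · exact h6 (a - 3) (by rw [hs]; exact_mod_cast s5')
      · omega

/-- The ideal class group of `K = ℚ(√−21)` is isomorphic to `(ℤ/2ℤ) × (ℤ/2ℤ)`; in
particular it has cardinality 4 and exponent 2. -/
theorem classGroup_sqrt_neg21
    (K : Type*) [Field K] [NumberField K]
    (hdeg : Module.finrank ℚ K = 2) (α : K) (hα : α ^ 2 = -21) :
    Nonempty (ClassGroup (NumberField.RingOfIntegers K) ≃*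
      (Multiplicative (ZMod 2) × Multiplicative (ZMod 2))) ∧
    Nat.card (ClassGroup (NumberField.RingOfIntegers K)) = 4 ∧
    Monoid.exponent (ClassGroup (NumberField.RingOfIntegers K)) = 2 := by
  have hk := q21_klein K hdeg α hα
  have hm : IsKleinFour (Multiplicative (ZMod 2) × Multiplicative (ZMod 2)) := by
    constructor
    · simp
    · rw [Monoid.exponent_prod]; simp
  exact ⟨IsKleinFour.nonempty_mulEquiv, hk.card_four, hk.exponent_two⟩
end
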